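/- arXiv:0907.1020 — 2 statements merged into one kernel-verified Lean document; each statement's English description precedes it below -/
import Mathlib

section
/- Under Assumptions 1.1, 1.2 and 1.3, almost surely on the event Λ ∩ {ξ = 0, r̂ > r} (with θ̂ = lim_n θ_n): ‖∇f(θ_n)‖² = o(γ_n^{−p̂}), |f(θ_n) − f(θ̂)| = o(γ_n^{−p̂}), and ‖θ_n − θ̂‖ = o(γ_n^{−q̂}) as n → ∞, where p̂ = p_{θ̂}, q̂ = q_{θ̂}, r̂ = r_{θ̂}. -/
open MeasureTheory Filter Asymptotics

/-- Abel summation bound. -/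
lemma abel_bound {E : Type*} [NormedAddCommGroup E] [NormedSpace ℝ E]
    (c : ℕ → ℝ) (s : ℕ → E) (n : ℕ) (ν : ℝ) (hc : ∀ i, n ≤ i → c (i+1) ≤ c i)
    (k : ℕ) (hk : n ≤ k) (hc0 : 0 ≤ c k)
    (hs : ∀ i, n ≤ i → i ≤ k → ‖∑ l ∈ Finset.Icc n i, s l‖ ≤ ν) :
    ‖∑ l ∈ Finset.Icc n k, c l • s l‖ ≤ c n * ν := by
  have key : ∀ i, n ≤ i → i ≤ k →
      ‖∑ l ∈ Finset.Icc n i, c l • s l - c i • ∑ l ∈ Finset.Icc n i, s l‖ ≤ (c n - c i) * ν := by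
    intro i hi
    induction i, hi using Nat.le_induction with
    | base => intro _; simp
    | succ i hi ih =>
      intro hik
      have h1 := ih (by omega)
      have h2 := hs i hi (by omega)
      rw [Finset.sum_Icc_succ_top (by omega), Finset.sum_Icc_succ_top (by omega)]
      have e : (∑ l ∈ Finset.Icc n i, c l • s l + c (i+1) • s (i+1)
          - c (i+1) • (∑ l ∈ Finset.Icc n i, s l + s (i+1)))
          = (∑ l ∈ Finset.Icc n i, c l • s l - c i • ∑ l ∈ Finset.Icc n i, s l)
            + (c i - c (i+1)) • ∑ l ∈ Finset.Icc n i, s l := by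
        rw [smul_add, sub_smul]; abel
      rw [e]
      have h3 : ‖(c i - c (i+1)) • ∑ l ∈ Finset.Icc n i, s l‖ ≤ (c i - c (i+1)) * ν := by
        rw [norm_smul, Real.norm_of_nonneg (by linarith [hc i hi])]
        exact mul_le_mul_of_nonneg_left h2 (by linarith [hc i hi])
      have := norm_add_le_of_le h1 h3
      linarith
  have h1 := key k hk le_rfl
  have h2 : ‖c k • ∑ l ∈ Finset.Icc n k, s l‖ ≤ c k * ν := by
    rw [norm_smul, Real.norm_of_nonneg hc0]
    exact mul_le_mul_of_nonneg_left (hs k hk le_rfl) hc0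
  have := norm_add_le_of_le h1 h2
  rw [sub_add_cancel] at this
  linarith

/-- Within one block the iterates stay close to the start of the block. -/
lemma block_close {E : Type*} [NormedAddCommGroup E] [InnerProductSpace ℝ E]
    (G : E → E) (α γ : ℕ → ℝ) (hαpos : ∀ n, 0 < α n)
    (hγ : ∀ n, γ (n+1) = γ n + α n) (θ ξ : ℕ → E)
    (hrec : ∀ n, θ (n + 1) = θ n - α n • (G (θ n) + ξ n))
    (L T η : ℝ) (hL : 0 ≤ L) (hT : 0 < T) (hLT : L * T ≤ 1/16)
    (hG : ∀ m n, ‖G (θ m) - G (θ n)‖ ≤ L * ‖θ m - θ n‖)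
    (n m : ℕ) (hm : γ m - γ n ≤ T)
    (hη : ∀ i, n ≤ i → i ≤ m → ‖∑ k ∈ Finset.Ico n i, α k • ξ k‖ ≤ η) :
    ∀ i, n ≤ i → i ≤ m → ‖θ i - θ n‖ ≤ 2 * (T * ‖G (θ n)‖ + η) ∧
      ‖θ i - θ n + (γ i - γ n) • G (θ n)‖ ≤
        (γ i - γ n) * (L * (2 * (T * ‖G (θ n)‖ + η))) + η := by
  have hmono : Monotone γ := monotone_nat_of_le_succ (fun n => by linarith [hγ n, hαpos n])
  have hdec : ∀ i, n ≤ i → θ i - θ n + (γ i - γ n) • G (θ n) =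
      - (∑ k ∈ Finset.Ico n i, α k • (G (θ k) - G (θ n))) - ∑ k ∈ Finset.Ico n i, α k • ξ k := by
    intro i hi
    induction i, hi using Nat.le_induction with
    | base => simp
    | succ i hi ih =>
      rw [Finset.sum_Ico_succ_top hi, Finset.sum_Ico_succ_top hi, hrec, hγ]
      have : θ i - α i • (G (θ i) + ξ i) - θ n + (γ i + α i - γ n) • G (θ n)
        = (θ i - θ n + (γ i - γ n) • G (θ n)) - α i • (G (θ i) - G (θ n)) - α i • ξ i := by
        module
      rw [this, ih]; abel
  set D := 2 * (T * ‖G (θ n)‖ + η) with hD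
  intro i
  induction i using Nat.strong_induction_on with
  | _ i ih =>
  intro hi him
  have hη0 : 0 ≤ η := le_trans (norm_nonneg _) (hη i hi him)
  have hD0 : 0 ≤ D := by positivity
  have hs : ∀ j, n ≤ j → γ j - γ n = ∑ k ∈ Finset.Ico n j, α k := by
    intro j hj
    induction j, hj using Nat.le_induction with
    | base => simp
    | succ j hj ih2 => rw [Finset.sum_Ico_succ_top hj, ← ih2, hγ]; ring
  have hτ0 : 0 ≤ γ i - γ n := by linarith [hmono hi]
  have hτT : γ i - γ n ≤ T := by linarith [hmono him]
  have h1 : ‖∑ k ∈ Finset.Ico n i, α k • (G (θ k) - G (θ n))‖ ≤ (γ i - γ n) * (L * D) := by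
    rw [hs i hi, Finset.sum_mul]
    refine norm_sum_le_of_le _ (fun k hk => ?_)
    rw [Finset.mem_Ico] at hk
    rw [norm_smul, Real.norm_of_nonneg (hαpos k).le]
    refine mul_le_mul_of_nonneg_left ?_ (hαpos k).le
    exact (hG k n).trans (mul_le_mul_of_nonneg_left (ih k hk.2 hk.1 (by omega)).1 hL)
  have h2 : ‖θ i - θ n + (γ i - γ n) • G (θ n)‖ ≤ (γ i - γ n) * (L * D) + η := by
    rw [hdec i hi]
    refine (norm_sub_le _ _).trans ?_
    rw [norm_neg]
    exact add_le_add h1 (hη i hi him)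
  refine ⟨?_, h2⟩
  have h3 : ‖(γ i - γ n) • G (θ n)‖ ≤ T * ‖G (θ n)‖ := by
    rw [norm_smul, Real.norm_of_nonneg hτ0]
    exact mul_le_mul_of_nonneg_right hτT (norm_nonneg _)
  have h4 := norm_sub_le (θ i - θ n + (γ i - γ n) • G (θ n)) ((γ i - γ n) • G (θ n))
  rw [add_sub_cancel_right] at h4
  have h5 : (γ i - γ n) * (L * D) ≤ 1/16 * D := by
    calc (γ i - γ n) * (L * D) ≤ T * (L * D) := mul_le_mul_of_nonneg_right hτT (by positivity)
      _ = (L * T) * D := by ring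
      _ ≤ _ := mul_le_mul_of_nonneg_right hLT hD0
  have : T * ‖G (θ n)‖ + η = D / 2 := by rw [hD]; ring
  linarith

/-- Descent over one block. -/
lemma block_descent {E : Type*} [NormedAddCommGroup E] [InnerProductSpace ℝ E]
    (f : E → ℝ) (G : E → E) (x y : E) (L T τ η : ℝ) (hL : 0 ≤ L) (hT : 0 < T)
    (hLT : L * T ≤ 1/16) (hτ1 : T / 2 ≤ τ) (hτ2 : τ ≤ T) (hη : 0 ≤ η)
    (hd : f y - f x - inner ℝ (G x) (y - x) ≤ L * ‖y - x‖ ^ 2)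
    (hw : ‖y - x + τ • G x‖ ≤ τ * (L * (2 * (T * ‖G x‖ + η))) + η) :
    f y ≤ f x - T / 8 * ‖G x‖ ^ 2 + (8 / T + 8 * L) * η ^ 2 := by
  set w := y - x + τ • G x with hwdef
  have hyx : y - x = w - τ • G x := by rw [hwdef]; abel
  set g := ‖G x‖ with hg
  have hg0 : 0 ≤ g := norm_nonneg _
  have hτ0 : 0 < τ := by linarith
  have hw2 : ‖w‖ ≤ τ * g / 4 + 2 * η := by
    have a1 : τ * (L * (2 * (T * g + η))) = (L * T) * (2 * τ * g) + (L * τ) * (2 * η) := by ring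
    have a2 : (L * T) * (2 * τ * g) ≤ 1/16 * (2 * τ * g) :=
      mul_le_mul_of_nonneg_right hLT (by positivity)
    have a3 : L * τ ≤ 1/16 := (mul_le_mul_of_nonneg_left hτ2 hL).trans hLT
    have a4 : (L * τ) * (2 * η) ≤ 1/16 * (2 * η) := mul_le_mul_of_nonneg_right a3 (by positivity)
    have a5 : 0 ≤ τ * g := by positivity
    linarith
  have hin : inner ℝ (G x) (y - x) ≤ g * ‖w‖ - τ * g ^ 2 := by
    rw [hyx, inner_sub_right, inner_smul_right, real_inner_self_eq_norm_sq]
    linarith [real_inner_le_norm (G x) w]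
  have hn : ‖y - x‖ ≤ 5/4 * (τ * g) + 2 * η := by
    rw [hyx]
    refine (norm_sub_le _ _).trans ?_
    rw [norm_smul, Real.norm_of_nonneg hτ0.le]
    linarith
  have hn2 : ‖y - x‖ ^ 2 ≤ 25/8 * (τ * g) ^ 2 + 8 * η ^ 2 := by
    have : ‖y - x‖ ^ 2 ≤ (5/4 * (τ * g) + 2 * η) ^ 2 :=
      pow_le_pow_left₀ (norm_nonneg _) hn 2
    nlinarith [sq_nonneg (5/4 * (τ * g) - 2 * η)]
  have hLn : L * ‖y - x‖ ^ 2 ≤ 25/128 * (τ * g ^ 2) + 8 * L * η ^ 2 := by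
    have a3 : L * τ ≤ 1/16 := (mul_le_mul_of_nonneg_left hτ2 hL).trans hLT
    have a4 := mul_le_mul_of_nonneg_left hn2 hL
    have a5 : (L * τ) * (τ * g ^ 2) ≤ 1/16 * (τ * g ^ 2) :=
      mul_le_mul_of_nonneg_right a3 (by positivity)
    nlinarith
  have hgw : g * ‖w‖ ≤ τ * g ^ 2 / 4 + 2 * (η * g) := by
    have := mul_le_mul_of_nonneg_left hw2 hg0
    nlinarith
  have hyoung : 2 * (η * g) ≤ T * g ^ 2 / 8 + 8 / T * η ^ 2 := by
    have h : T * g ^ 2 / 8 + 8 / T * η ^ 2 - 2 * (η * g) = (T * g - 8 * η) ^ 2 / (8 * T) := by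
      field_simp; ring
    have : 0 ≤ (T * g - 8 * η) ^ 2 / (8 * T) := by positivity
    linarith
  have hfin : T / 2 * g ^ 2 ≤ τ * g ^ 2 := mul_le_mul_of_nonneg_right hτ1 (by positivity)
  nlinarith [sq_nonneg g]

/-- Block decomposition of the recursion. -/
lemma blocks {E : Type*} [NormedAddCommGroup E] [InnerProductSpace ℝ E]
    (f : E → ℝ) (G : E → E) (α γ : ℕ → ℝ) (hαpos : ∀ n, 0 < α n)
    (hα0 : Tendsto α atTop (nhds 0)) (hγ0 : 0 ≤ γ 0)
    (hγ : ∀ n, γ (n+1) = γ n + α n) (hdiv : Tendsto γ atTop atTop) (θ ξ : ℕ → E)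
    (hrec : ∀ n, θ (n + 1) = θ n - α n • (G (θ n) + ξ n))
    (L : ℝ) (hL : 0 ≤ L)
    (hG : ∀ m n, ‖G (θ m) - G (θ n)‖ ≤ L * ‖θ m - θ n‖)
    (hf : ∀ m n, |f (θ m) - f (θ n) - inner ℝ (G (θ n)) (θ m - θ n)| ≤ L * ‖θ m - θ n‖ ^ 2)
    (β : ℕ → ℝ)
    (hβ : ∀ n i, 1 ≤ n → n ≤ i → γ i - γ n ≤ 1 → ‖∑ k ∈ Finset.Ico n i, α k • ξ k‖ ≤ β n) :
    ∃ (N : ℕ → ℕ) (c K : ℝ), StrictMono N ∧ 0 < c ∧ 0 < K ∧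
      (∀ j, 1 ≤ N j) ∧
      (∀ j, 0 ≤ β (N j)) ∧
      (∀ j, f (θ (N (j+1))) ≤ f (θ (N j)) - c * ‖G (θ (N j))‖ ^ 2 + K * β (N j) ^ 2) ∧
      (∀ j n, N j ≤ n → n ≤ N (j+1) → ‖θ n - θ (N j)‖ ≤ K * (‖G (θ (N j))‖ + β (N j))) ∧
      (∀ j : ℕ, c * j ≤ γ (N j)) ∧
      (∀ (j : ℕ) n, n ≤ N (j+1) → γ n ≤ K * (j + 1)) := by
  obtain ⟨T, hT, hT1, hLT⟩ : ∃ T : ℝ, 0 < T ∧ T ≤ 1 ∧ L * T ≤ 1/16 := by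
    refine ⟨1 / (16 * (L + 1)), by positivity, ?_, ?_⟩
    · rw [div_le_one (by positivity)]; linarith
    · rw [mul_one_div, div_le_div_iff₀ (by positivity) (by norm_num)]; linarith
  have hmono : StrictMono γ := strictMono_nat_of_lt_succ (fun n => by linarith [hγ n, hαpos n])
  have hγnn : ∀ n, 0 ≤ γ n := fun n => hγ0.trans (hmono.monotone (Nat.zero_le n))
  obtain ⟨n0, hn0⟩ : ∃ n0, ∀ n ≥ n0, α n ≤ T / 2 :=
    eventually_atTop.1 (hα0.eventually (eventually_le_nhds (by positivity)))
  have hnext : ∀ n, ∃ m, n0 ≤ n → n < m ∧ T / 2 ≤ γ m - γ n ∧ γ m - γ n ≤ T := by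
    intro n
    have hex : ∃ m, γ n + T / 2 ≤ γ m := (hdiv.eventually_ge_atTop _).exists
    classical
    refine ⟨Nat.find hex, fun hn => ?_⟩
    have h1 := Nat.find_spec hex
    have h2 : n < Nat.find hex := by
      by_contra h
      have := hmono.monotone (not_lt.1 h)
      linarith
    refine ⟨h2, by linarith, ?_⟩
    obtain ⟨k, hk⟩ : ∃ k, Nat.find hex = k + 1 := ⟨Nat.find hex - 1, by omega⟩
    have h3 := Nat.find_min hex (m := k) (by omega)
    rw [hk, hγ]
    have := hn0 k (by omega)
    push Not at h3
    linarith
  choose nx hnx using hnext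
  let N : ℕ → ℕ := fun j => Nat.rec (n0 + 1) (fun _ m => nx m) j
  have hN0 : N 0 = n0 + 1 := rfl
  have hNs : ∀ j, N (j+1) = nx (N j) := fun j => rfl
  have hNge : ∀ j, n0 + 1 ≤ N j := by
    intro j
    induction j with
    | zero => exact hN0.ge
    | succ j ih =>
      rw [hNs]; have := (hnx (N j) (by omega)).1; omega
  have hstep : ∀ j, N j < N (j+1) ∧ T / 2 ≤ γ (N (j+1)) - γ (N j) ∧ γ (N (j+1)) - γ (N j) ≤ T :=
    fun j => hnx (N j) (by have := hNge j; omega)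
  have hβ' : ∀ j, ∀ i, N j ≤ i → i ≤ N (j+1) →
      ‖∑ k ∈ Finset.Ico (N j) i, α k • ξ k‖ ≤ β (N j) := by
    intro j i h1 h2
    refine hβ _ _ (by have := hNge j; omega) h1 ?_
    have := hmono.monotone h2
    linarith [(hstep j).2.2]
  have hβ0 : ∀ j, 0 ≤ β (N j) := fun j =>
    (norm_nonneg _).trans (hβ' j (N j) le_rfl (hstep j).1.le)
  have hclose := fun j => block_close G α γ hαpos hγ θ ξ hrec L T (β (N j)) hL hT hLT hG
    (N j) (N (j+1)) (hstep j).2.2 (hβ' j)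
  have hlow : ∀ j : ℕ, T / 2 * j ≤ γ (N j) := by
    intro j
    induction j with
    | zero => simpa using hγnn _
    | succ j ih => push_cast; linarith [(hstep j).2.1]
  have hup : ∀ j : ℕ, γ (N j) ≤ γ (n0 + 1) + T * j := by
    intro j
    induction j with
    | zero => simp [hN0]
    | succ j ih => push_cast; linarith [(hstep j).2.2]
  refine ⟨N, T / 8, 8 / T + 8 * L + 2 + (γ (n0+1) + 1), strictMono_nat_of_lt_succ (fun j => (hstep j).1),
    by positivity, ?_, fun j => by have := hNge j; omega, hβ0, ?_, ?_, ?_, ?_⟩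
  · have := hγnn (n0+1); positivity
  · intro j
    have h := block_descent f G (θ (N j)) (θ (N (j+1))) L T (γ (N (j+1)) - γ (N j)) (β (N j)) hL hT hLT
      (hstep j).2.1 (hstep j).2.2 (hβ0 j) ((le_abs_self _).trans (hf _ _))
      (hclose j (N (j+1)) (hstep j).1.le le_rfl).2
    have := hγnn (n0+1)
    nlinarith [sq_nonneg (β (N j))]
  · intro j n h1 h2
    have h := (hclose j n h1 h2).1
    have a1 : T * ‖G (θ (N j))‖ ≤ 1 * ‖G (θ (N j))‖ :=
      mul_le_mul_of_nonneg_right hT1 (norm_nonneg _)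
    have a2 : 0 ≤ 8 / T + 8 * L + (γ (n0+1) + 1) := by
      have := hγnn (n0+1); positivity
    have a3 : 0 ≤ ‖G (θ (N j))‖ + β (N j) := add_nonneg (norm_nonneg _) (hβ0 j)
    nlinarith [mul_nonneg a2 a3]
  · intro j
    have : (0:ℝ) ≤ j := Nat.cast_nonneg _
    have := hlow j
    nlinarith
  · intro j n hn
    have h1 := hmono.monotone hn
    have h2 := hup (j+1)
    push_cast at h2
    have hj : (0:ℝ) ≤ j := Nat.cast_nonneg _
    have h3 := hγnn (n0+1)
    have h4 : 0 ≤ 8 / T + 8 * L := by positivity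
    have h5 : T * (j+1) ≤ 1 * (j+1) := mul_le_mul_of_nonneg_right hT1 (by positivity)
    nlinarith [mul_nonneg h4 hj, mul_nonneg h3 hj]

lemma rpow_neg_diff (s x : ℝ) (hs : 0 < s) (hx : 1 ≤ x) :
    s * 2 ^ (-(s+1)) * x ^ (-(s+1)) ≤ x ^ (-s) - (x+1) ^ (-s) := by
  have hx0 : 0 < x := by linarith
  have hx1 : 0 < x + 1 := by linarith
  have h1 : x ^ (-s) = (x+1) ^ (-s) * ((x+1)/x) ^ s := by
    rw [Real.div_rpow hx1.le hx0.le, Real.rpow_neg hx1.le, Real.rpow_neg hx0.le]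
    have := (Real.rpow_pos_of_pos hx1 s).ne'
    field_simp
  have h2 : 1 + s / (x+1) ≤ ((x+1)/x) ^ s := by
    have hq : 0 < (x+1)/x := by positivity
    rw [Real.rpow_def_of_pos hq]
    have h3 := Real.one_sub_inv_le_log_of_pos hq
    have h4 := Real.add_one_le_exp (Real.log ((x+1)/x) * s)
    have h5 : 1 - ((x+1)/x)⁻¹ = 1 / (x+1) := by field_simp; ring
    rw [h5] at h3
    have h6 := mul_le_mul_of_nonneg_right h3 hs.le
    have h7 : 1 / (x+1) * s = s / (x+1) := by ring
    linarith
  have h3 : (x+1) ^ (-(s+1)) = (x+1) ^ (-s) / (x+1) := by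
    rw [← Real.rpow_sub_one hx1.ne']; congr 1; ring
  have h4 : 2 ^ (-(s+1)) * x ^ (-(s+1)) ≤ (x+1) ^ (-(s+1)) := by
    rw [← Real.mul_rpow (by norm_num) hx0.le]
    exact Real.rpow_le_rpow_of_nonpos hx1 (by linarith) (by linarith)
  have h5 := mul_le_mul_of_nonneg_left h2 (Real.rpow_pos_of_pos hx1 (-s)).le
  rw [← h1] at h5
  have h6 := mul_le_mul_of_nonneg_left h4 hs.le
  rw [h3] at h6
  have : (x+1)^(-s) * (1 + s/(x+1)) = (x+1)^(-s) + s * ((x+1)^(-s)/(x+1)) := by ring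
  linarith

lemma rpow_diff (r x : ℝ) (hr : 1 ≤ r) (hx : 1 ≤ x) :
    (x+1) ^ r - x ^ r ≤ r * 2 ^ (r-1) * x ^ (r-1) := by
  have hx0 : 0 < x := by linarith
  have hx1 : 0 < x + 1 := by linarith
  have h1 := one_add_mul_self_le_rpow_one_add (s := -(1/(x+1)))
    (by rw [neg_le_neg_iff, div_le_one hx1]; linarith) hr
  have h2 : 1 + -(1/(x+1)) = x / (x+1) := by field_simp; ring
  rw [h2, Real.div_rpow hx0.le hx1.le, le_div_iff₀ (Real.rpow_pos_of_pos hx1 r)] at h1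
  have h3 : (x+1) ^ (r-1) = (x+1) ^ r / (x+1) := Real.rpow_sub_one hx1.ne' r
  have h4 : (x+1) ^ (r-1) ≤ 2 ^ (r-1) * x ^ (r-1) := by
    rw [← Real.mul_rpow (by norm_num) hx0.le]
    exact Real.rpow_le_rpow hx1.le (by linarith) (by linarith)
  have h5 := mul_le_mul_of_nonneg_left h4 (by linarith : (0:ℝ) ≤ r)
  rw [h3] at h5
  have : (1 + r * -(1/(x+1))) * (x+1)^r = (x+1)^r - r * ((x+1)^r/(x+1)) := by ring
  linarith

lemma X_ge (j : ℕ) : (1:ℝ) ≤ (j:ℝ) + 1 := by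
  have : (0:ℝ) ≤ j := Nat.cast_nonneg _
  linarith

lemma X_tendsto : Tendsto (fun j : ℕ => (j:ℝ) + 1) atTop atTop :=
  tendsto_atTop_add_const_right _ _ tendsto_natCast_atTop_atTop

lemma X_rpow_tendsto (s : ℝ) (hs : s < 0) :
    Tendsto (fun j : ℕ => ((j:ℝ) + 1) ^ s) atTop (nhds 0) := by
  have := (tendsto_rpow_neg_atTop (y := -s) (by linarith)).comp X_tendsto
  simpa [Function.comp_def] using this

/-- adding a summable polynomial potential makes the sequence nonincreasing -/
lemma potential (r : ℝ) (hr : 1 < r) : ∃ C : ℝ, 0 < C ∧ ∀ (u d : ℕ → ℝ) (K : ℝ) (J : ℕ),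
    0 ≤ K →
    (∀ j ≥ J, u (j+1) ≤ u j - d j + K * ((j:ℝ)+1) ^ (-(2*r))) →
    ∀ j ≥ J, u (j+1) + C * K * (((j+1 : ℕ):ℝ)+1) ^ (1-2*r) ≤
      u j + C * K * ((j:ℝ)+1) ^ (1-2*r) - d j := by
  set s := 2 * r - 1 with hs
  have hs0 : 0 < s := by rw [hs]; linarith
  refine ⟨(s * 2 ^ (-(s+1)))⁻¹, by positivity, ?_⟩
  intro u d K J hK h j hj
  have h1 := rpow_neg_diff s ((j:ℝ)+1) hs0 (X_ge j)
  have e1 : -(s+1) = -(2*r) := by rw [hs]; ring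
  have e2 : -s = 1 - 2*r := by rw [hs]; ring
  have hpos : 0 < s * 2 ^ (-(s+1)) := by positivity
  have h2 := mul_le_mul_of_nonneg_left h1 (mul_nonneg (inv_nonneg.2 hpos.le) hK)
  have e3 : (s * 2 ^ (-(s+1)))⁻¹ * K * (s * 2 ^ (-(s+1)) * ((j:ℝ)+1) ^ (-(s+1)))
    = K * ((j:ℝ)+1) ^ (-(s+1)) := by field_simp
  rw [e3] at h2
  rw [e2] at h2
  have h3 := h j hj
  rw [← e1] at h3
  push_cast
  linarith

lemma tail_conv (v : ℕ → ℝ) (J : ℕ) (B : ℝ) (hB : ∀ j, B ≤ v j)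
    (h : ∀ j ≥ J, v (j+1) ≤ v j) : ∃ l, Tendsto v atTop (nhds l) := by
  have ha : Antitone (fun j => v (j + J)) := antitone_nat_of_succ_le (fun j => by
    have := h (j+J) (by omega)
    rwa [show j + 1 + J = j + J + 1 by ring])
  have := tendsto_atTop_ciInf ha ⟨B, by rintro _ ⟨j, rfl⟩; exact hB _⟩
  exact ⟨_, (tendsto_add_atTop_iff_nat J).1 this⟩

lemma tail_nonneg (v : ℕ → ℝ) (J : ℕ) (l : ℝ) (hl : Tendsto v atTop (nhds l))
    (h : ∀ j ≥ J, v (j+1) ≤ v j) : ∀ j ≥ J, l ≤ v j := by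
  intro j hj
  refine le_of_tendsto hl ?_
  filter_upwards [eventually_ge_atTop j] with i hi
  induction i, hi using Nat.le_induction with
  | base => exact le_rfl
  | succ i hi ih => exact (h i (by omega)).trans ih

lemma summable_of_telescope (a Φ h : ℕ → ℝ) (J : ℕ) (ha : ∀ j, 0 ≤ a j)
    (hΦ : ∀ j ≥ J, 0 ≤ Φ j) (hh : Summable h) (hh0 : ∀ j, 0 ≤ h j)
    (hle : ∀ j ≥ J, a j ≤ Φ j - Φ (j+1) + h j) : Summable a := by
  rw [← summable_nat_add_iff J]
  refine summable_of_sum_range_le (c := Φ J + ∑' j, h (j + J)) (fun j => ha _) (fun n => ?_)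
  have h1 : ∑ i ∈ Finset.range n, a (i + J) ≤ Φ J - Φ (n + J) + ∑ i ∈ Finset.range n, h (i + J) := by
    induction n with
    | zero => simp
    | succ n ih =>
      rw [Finset.sum_range_succ, Finset.sum_range_succ]
      have := hle (n+J) (by omega)
      rw [show n + 1 + J = n + J + 1 by ring]
      linarith
  have h2 : ∑ i ∈ Finset.range n, h (i + J) ≤ ∑' j, h (j + J) :=
    ((summable_nat_add_iff J).2 hh).sum_le_tsum _ (fun i _ => hh0 _)
  have := hΦ (n+J) (by omega)
  linarith

lemma concave_diff (e a b : ℝ) (he0 : 0 ≤ e) (he1 : e ≤ 1) (ha : 0 < a) (hb : 0 ≤ b) :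
    e * a ^ (e - 1) * (a - b) ≤ a ^ e - b ^ e := by
  have h1 := rpow_one_add_le_one_add_mul_self (s := b/a - 1)
    (by have : 0 ≤ b / a := by positivity
        linarith) he0 he1
  rw [add_sub_cancel, Real.div_rpow hb ha.le, div_le_iff₀ (Real.rpow_pos_of_pos ha e)] at h1
  rw [Real.rpow_sub_one ha.ne']
  have : (1 + e * (b / a - 1)) * a ^ e = a ^ e - e * (a ^ e / a) * (a - b) := by
    field_simp; ring
  linarith

lemma summable_grad (r : ℝ) (hr : 1 < r) (y g : ℕ → ℝ) (c K M μ : ℝ) (J : ℕ)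
    (hc : 0 < c) (hK : 0 ≤ K) (hM : 1 ≤ M) (hμ1 : 1 < μ) (hg : ∀ j, 0 ≤ g j)
    (hy : Tendsto y atTop (nhds 0))
    (hstep : ∀ j ≥ J, y (j+1) ≤ y j - c * g j ^ 2 + K * ((j:ℝ)+1) ^ (-(2*r)))
    (hloj : ∀ᶠ j in atTop, |y j| ≤ M * g j ^ μ) : Summable g := by
  obtain ⟨C, hC, hpot⟩ := potential r hr
  have hV := hpot y (fun j => c * g j ^ 2) K J hK hstep
  set V : ℕ → ℝ := fun j => y j + C * K * ((j:ℝ)+1) ^ (1-2*r) with hVdef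
  have hV' : ∀ j ≥ J, V (j+1) ≤ V j - c * g j ^ 2 := fun j hj => hV j hj
  have hVt : Tendsto V atTop (nhds 0) := by
    have := hy.add ((X_rpow_tendsto (1-2*r) (by linarith)).const_mul (C*K))
    simpa using this
  have hV0 : ∀ j ≥ J, 0 ≤ V j := tail_nonneg V J 0 hVt
    (fun j hj => by have := hV' j hj; have : 0 ≤ c * g j ^ 2 := by positivity
                    linarith)
  set m := min μ r with hm
  have hm1 : 1 < m := lt_min hμ1 hr
  have hm0 : 0 < m := by linarith
  have hmr : m ≤ r := min_le_right _ _
  have hmμ : m ≤ μ := min_le_left _ _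
  have hm' : 1 / m < 1 := by rw [div_lt_one hm0]; exact hm1
  have hm'0 : 0 < 1 / m := by positivity
  obtain ⟨J1, hJ1⟩ := eventually_atTop.1 hloj
  obtain ⟨J2, hJ2⟩ := eventually_atTop.1 (hVt.eventually (eventually_le_nhds hc))
  set J' := max J (max J1 J2)
  set A := (2*M) ^ (1/m) / (c * (1 - 1/m)) with hA
  have hA0 : 0 ≤ A := by
    have : 0 < 1 - 1/m := by linarith
    positivity
  refine summable_of_telescope g (fun j => A * V j ^ (1 - 1/m))
    (fun j => (C*K) ^ (1/m) * ((j:ℝ)+1) ^ ((1-2*r)/m)) J' hg ?_ ?_ ?_ ?_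
  · intro j hj
    have := hV0 j (by omega)
    positivity
  · refine Summable.mul_left _ ?_
    have h1 : Summable (fun n : ℕ => (n:ℝ) ^ ((1-2*r)/m)) := by
      rw [Real.summable_nat_rpow, div_lt_iff₀ hm0]; linarith
    have := (summable_nat_add_iff 1).2 h1
    simpa using this
  · intro j
    have := X_ge j
    positivity
  · intro j hj
    have hjJ : j ≥ J := by omega
    have a1 := hV' j hjJ
    have a2 := hV0 j hjJ
    have a3 := hV0 (j+1) (by omega)
    have a4 := hJ1 j (by omega)
    have a5 := hJ2 j (by omega)
    have hX : 0 < (j:ℝ) + 1 := by linarith [X_ge j]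
    have hg1 : g j ≤ 1 := by
      have : c * g j ^ 2 ≤ c * 1 := by linarith
      have : g j ^ 2 ≤ 1 := le_of_mul_le_mul_left this hc
      nlinarith [hg j]
    have hmonoV : V (j+1) ≤ V j := by
      have : 0 ≤ c * g j ^ 2 := by positivity
      linarith
    have htel : 0 ≤ A * V j ^ (1 - 1/m) - A * V (j+1) ^ (1 - 1/m) := by
      rw [← mul_sub]
      refine mul_nonneg hA0 (sub_nonneg.2 (Real.rpow_le_rpow a3 hmonoV (by linarith)))
    have hP : 0 ≤ (C*K) ^ (1/m) * ((j:ℝ)+1) ^ ((1-2*r)/m) := by positivity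
    rcases (hg j).eq_or_lt with h0 | hgpos
    · rw [← h0]; linarith
    have hVpos : 0 < V j := by
      have : 0 < c * g j ^ 2 := by positivity
      linarith
    have hgm : g j ^ μ ≤ g j ^ m := Real.rpow_le_rpow_of_exponent_ge hgpos hg1 hmμ
    have hVle : V j ≤ M * g j ^ m + C * K * ((j:ℝ)+1) ^ (1-2*r) := by
      have : y j ≤ M * g j ^ m := (le_abs_self _).trans (a4.trans
        (mul_le_mul_of_nonneg_left hgm (by linarith)))
      simp only [hVdef]; linarith
    have hgmm : (g j ^ m) ^ (1/m) = g j := by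
      rw [← Real.rpow_mul hgpos.le, mul_one_div_cancel hm0.ne', Real.rpow_one]
    have hgm0 : 0 ≤ g j ^ m := by positivity
    rcases le_total (C * K * ((j:ℝ)+1) ^ (1-2*r)) (M * g j ^ m) with hcase | hcase
    · have b1 : V j ≤ 2 * M * g j ^ m := by linarith
      have b2 : V j ^ (1/m) ≤ (2*M) ^ (1/m) * g j := by
        have := Real.rpow_le_rpow a2 b1 hm'0.le
        rwa [Real.mul_rpow (by linarith) hgm0, hgmm] at this
      have b3 := concave_diff (1 - 1/m) (V j) (V (j+1)) (by linarith) (by linarith) hVpos a3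
      rw [show 1 - 1/m - 1 = -(1/m) by ring, Real.rpow_neg a2] at b3
      have hVp : 0 < V j ^ (1/m) := by positivity
      have b4 : c * g j ^ 2 ≤ V j - V (j+1) := by linarith
      have h1m : 0 < 1 - 1/m := by linarith
      have b5 : (1 - 1/m) * (V j ^ (1/m))⁻¹ * (c * g j ^ 2) ≤
          V j ^ (1 - 1/m) - V (j+1) ^ (1 - 1/m) :=
        (mul_le_mul_of_nonneg_left b4 (by positivity)).trans b3
      have b6 := mul_le_mul_of_nonneg_left b5 hA0
      have b7 : g j ≤ A * ((1 - 1/m) * (V j ^ (1/m))⁻¹ * (c * g j ^ 2)) := by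
        have : A * ((1 - 1/m) * (V j ^ (1/m))⁻¹ * (c * g j ^ 2)) =
            ((2*M) ^ (1/m) * g j) * g j / V j ^ (1/m) := by
          rw [hA]
          generalize 1 - 1/m = w at h1m ⊢
          field_simp
        rw [this, le_div_iff₀ hVp, mul_comm]
        exact mul_le_mul_of_nonneg_right b2 hgpos.le
      linarith
    · have b1 : g j ^ m ≤ C * K * ((j:ℝ)+1) ^ (1-2*r) := by nlinarith
      have b2 := Real.rpow_le_rpow hgm0 b1 hm'0.le
      rw [hgmm, Real.mul_rpow (by positivity) (by positivity), ← Real.rpow_mul hX.le,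
        mul_one_div] at b2
      linarith

/-- Quantitative use of the Lojasiewicz inequality when `|y|` is not too small. -/
lemma loj_key (r μ M c ε : ℝ) (hμ1 : 1 < μ) (hμ2 : μ ≤ 2) (hM : 1 ≤ M)
    (hc : 0 < c) (hε : 0 < ε) : ∃ κ : ℝ, 0 < κ ∧ ∀ x z g : ℝ, 1 ≤ x → 0 ≤ g →
      ε * x ^ (-(μ*r)) ≤ z → z ≤ M * g ^ μ → κ * z * x ^ (-(r*(2-μ))) ≤ c * g ^ 2 := by
  have hM0 : 0 < M := by linarith
  have hμ0 : 0 < μ := by linarith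
  have he : 0 ≤ 2/μ - 1 := by
    rw [sub_nonneg, le_div_iff₀ hμ0]; linarith
  refine ⟨c * (M⁻¹ * (ε/M) ^ (2/μ-1)), by positivity, ?_⟩
  intro x z g hx hg hz1 hz2
  have hx0 : 0 < x := by linarith
  have hz0 : 0 < z := lt_of_lt_of_le (by positivity) hz1
  have h1 : z / M ≤ g ^ μ := by rw [div_le_iff₀ hM0]; linarith
  have h2 : (z/M) ^ (2/μ) ≤ g ^ 2 := by
    have := Real.rpow_le_rpow (by positivity) h1 (by positivity : 0 ≤ 2/μ)
    rwa [← Real.rpow_mul hg, mul_div_cancel₀ _ hμ0.ne', Real.rpow_two] at this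
  have h3 : (z/M) ^ (2/μ) = (z/M) * (z/M) ^ (2/μ-1) := by
    rw [Real.rpow_sub_one (by positivity)]
    field_simp
  have h4 : (ε/M) ^ (2/μ-1) * x ^ (-(r*(2-μ))) ≤ (z/M) ^ (2/μ-1) := by
    have h5 : (ε/M) * x ^ (-(μ*r)) ≤ z / M := by
      rw [div_mul_eq_mul_div]; gcongr
    have := Real.rpow_le_rpow (by positivity) h5 he
    rw [Real.mul_rpow (by positivity) (by positivity), ← Real.rpow_mul hx0.le] at this
    have e : -(μ*r) * (2/μ-1) = -(r*(2-μ)) := by field_simp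
    rwa [e] at this
  have h5 : (z/M) * ((ε/M) ^ (2/μ-1) * x ^ (-(r*(2-μ)))) ≤ g ^ 2 := by
    refine le_trans ?_ h2
    rw [h3]
    exact mul_le_mul_of_nonneg_left h4 (by positivity)
  have := mul_le_mul_of_nonneg_left h5 hc.le
  calc _ = c * ((z/M) * ((ε/M) ^ (2/μ-1) * x ^ (-(r*(2-μ))))) := by field_simp
    _ ≤ _ := this

/-- one step consequence -/
lemma rate_step (r μ M c ε : ℝ) (hμ1 : 1 < μ) (hμ2 : μ ≤ 2) (hM : 1 ≤ M)
    (hc : 0 < c) (hε : 0 < ε) (y g e : ℕ → ℝ) (hg : ∀ j, 0 ≤ g j)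
    (hstep : ∀ᶠ j in atTop, y (j+1) ≤ y j - c * g j ^ 2 + e j)
    (he : ∀ ε > 0, ∀ᶠ j : ℕ in atTop, e j ≤ ε * ((j:ℝ)+1) ^ (-(2*r)))
    (hloj : ∀ᶠ j in atTop, |y j| ≤ M * g j ^ μ) :
    ∃ κ : ℝ, 0 < κ ∧ ∀ᶠ j : ℕ in atTop, ε * ((j:ℝ)+1) ^ (-(μ*r)) ≤ |y j| →
      y (j+1) ≤ y j - κ * |y j| * ((j:ℝ)+1) ^ (-(r*(2-μ))) := by
  obtain ⟨κ, hκ, hk⟩ := loj_key r μ M c ε hμ1 hμ2 hM hc hε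
  refine ⟨κ/2, by positivity, ?_⟩
  filter_upwards [hstep, hloj, he (κ * ε / 2) (by positivity)] with j h1 h2 h3 h4
  have hX := X_ge j
  have hX0 : 0 < (j:ℝ) + 1 := by linarith
  have h5 := hk _ _ _ hX (hg j) h4 h2
  have e1 : ((j:ℝ)+1) ^ (-(2*r)) = ((j:ℝ)+1) ^ (-(μ*r)) * ((j:ℝ)+1) ^ (-(r*(2-μ))) := by
    rw [← Real.rpow_add hX0]; congr 1; ring
  have h6 : κ * ε / 2 * ((j:ℝ)+1) ^ (-(2*r)) ≤ κ / 2 * |y j| * ((j:ℝ)+1) ^ (-(r*(2-μ))) := by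
    rw [e1]
    have := mul_le_mul_of_nonneg_left (mul_le_mul_of_nonneg_right h4
      (by positivity : 0 ≤ ((j:ℝ)+1) ^ (-(r*(2-μ))))) (by positivity : 0 ≤ κ/2)
    linarith
  linarith

lemma upper_rate (r μ M c : ℝ) (hr : 1 < r) (hμ1 : 1 < μ) (hμ2 : μ ≤ 2) (hs : r * (2-μ) < 1)
    (hM : 1 ≤ M) (hc : 0 < c) (y g e : ℕ → ℝ) (hg : ∀ j, 0 ≤ g j)
    (hstep : ∀ᶠ j in atTop, y (j+1) ≤ y j - c * g j ^ 2 + e j)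
    (he : ∀ ε > 0, ∀ᶠ j : ℕ in atTop, e j ≤ ε * ((j:ℝ)+1) ^ (-(2*r)))
    (hloj : ∀ᶠ j in atTop, |y j| ≤ M * g j ^ μ) (ε : ℝ) (hε : 0 < ε) :
    ∀ᶠ j : ℕ in atTop, y j ≤ 2 * 2 ^ (μ*r) * ε * ((j:ℝ)+1) ^ (-(μ*r)) := by
  obtain ⟨κ, hκ, hk⟩ := rate_step r μ M c ε hμ1 hμ2 hM hc hε y g e hg hstep he hloj
  set p := μ * r with hp
  have hp0 : 0 < p := by positivity
  set s := r * (2-μ) with hsdef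
  have hlarge : ∀ᶠ j : ℕ in atTop, (p+1) / κ ≤ ((j:ℝ)+1) ^ (1-s) :=
    ((tendsto_rpow_atTop (by linarith : 0 < 1 - s)).comp X_tendsto).eventually_ge_atTop _
  have hall : ∀ᶠ j : ℕ in atTop,
      (ε * ((j:ℝ)+1) ^ (-p) ≤ y j → y (j+1) * ((j:ℝ)+2) ^ (p+1) ≤ y j * ((j:ℝ)+1) ^ (p+1)) ∧
      (y j ≤ ε * ((j:ℝ)+1) ^ (-p) → y (j+1) ≤ 2 * 2 ^ p * ε * ((j:ℝ)+2) ^ (-p)) := by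
    filter_upwards [hk, hlarge, hstep, he ε hε] with j h1 h2 h3 h4
    have hX := X_ge j
    set x := (j:ℝ) + 1 with hx
    have hx2 : (j:ℝ) + 2 = x + 1 := by rw [hx]; ring
    have hx0 : 0 < x := by linarith
    have hx1 : 0 < x + 1 := by linarith
    rw [hx2]
    constructor
    · intro h5
      have hy0 : 0 < y j := lt_of_lt_of_le (by positivity) h5
      rw [abs_of_pos hy0] at h1
      have h6 := h1 h5
      have h7 : (p+1) / x ≤ κ * x ^ (-s) := by
        rw [div_le_iff₀ hκ] at h2
        rw [div_le_iff₀ hx0]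
        have : x ^ (1-s) = x ^ (-s) * x := by
          rw [← Real.rpow_add_one hx0.ne']; congr 1; ring
        rw [this] at h2
        linarith
      have h8 : (p+1) / (x+1) ≤ κ * x ^ (-s) := le_trans (by gcongr; linarith) h7
      have h9 := one_add_mul_self_le_rpow_one_add (s := -(1/(x+1))) (p := p+1)
        (by rw [neg_le_neg_iff, div_le_one hx1]; linarith) (by linarith)
      have e2 : 1 + -(1/(x+1)) = x / (x+1) := by field_simp; ring
      rw [e2, Real.div_rpow hx0.le hx1.le, le_div_iff₀ (by positivity)] at h9
      have h10 : y (j+1) ≤ y j * (1 + (p+1) * -(1/(x+1))) := by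
        have := mul_le_mul_of_nonneg_left h8 hy0.le
        have e3 : y j * (1 + (p+1) * -(1/(x+1))) = y j - y j * ((p+1)/(x+1)) := by ring
        rw [e3]; linarith
      calc y (j+1) * (x+1) ^ (p+1) ≤ y j * (1 + (p+1) * -(1/(x+1))) * (x+1) ^ (p+1) :=
            mul_le_mul_of_nonneg_right h10 (by positivity)
        _ = y j * ((1 + (p+1) * -(1/(x+1))) * (x+1) ^ (p+1)) := by ring
        _ ≤ _ := mul_le_mul_of_nonneg_left h9 hy0.le
    · intro h5
      have a1 : x ^ (-(2*r)) ≤ x ^ (-p) :=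
        Real.rpow_le_rpow_of_exponent_le hX (by rw [hp]; nlinarith)
      have a2 : 0 ≤ c * g j ^ 2 := by positivity
      have a3 : x ^ (-p) ≤ 2 ^ p * (x+1) ^ (-p) := by
        have h6 : (x+1) ^ p ≤ 2 ^ p * x ^ p := by
          rw [← Real.mul_rpow (by norm_num) hx0.le]
          exact Real.rpow_le_rpow hx1.le (by linarith) hp0.le
        rw [Real.rpow_neg hx0.le, Real.rpow_neg hx1.le, ← div_eq_mul_inv,
          inv_eq_one_div, div_le_div_iff₀ (by positivity) (by positivity)]
        linarith
      have a4 := mul_le_mul_of_nonneg_left a1 hε.le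
      have a5 := mul_le_mul_of_nonneg_left a3 hε.le
      linarith
  obtain ⟨J, hJ⟩ := eventually_atTop.1 hall
  have h2p : (1:ℝ) ≤ 2 ^ p := Real.one_le_rpow (by norm_num) hp0.le
  -- the sequence enters the target region
  obtain ⟨J', hJJ', hJ'⟩ : ∃ J' ≥ J, y J' ≤ ε * ((J':ℝ)+1) ^ (-p) := by
    by_contra! hcon
    have hdec : ∀ j ≥ J, y j * ((j:ℝ)+1) ^ (p+1) ≤ y J * ((J:ℝ)+1) ^ (p+1) := by
      intro j hj
      induction j, hj using Nat.le_induction with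
      | base => exact le_rfl
      | succ j hj ih =>
        have := (hJ j hj).1 (hcon j hj).le
        push_cast
        rw [show (j:ℝ) + 1 + 1 = (j:ℝ) + 2 by ring]
        exact this.trans ih
    obtain ⟨j, hj1, hj2⟩ := ((X_tendsto.eventually_gt_atTop
      (y J * ((J:ℝ)+1) ^ (p+1) / ε)).and (eventually_ge_atTop J)).exists
    have h1 := hdec j hj2
    have h2 := hcon j hj2
    have hX := X_ge j
    have hx0 : 0 < (j:ℝ) + 1 := by linarith
    rw [div_lt_iff₀ hε] at hj1
    have h3 : ε * ((j:ℝ)+1) ^ (-p) * ((j:ℝ)+1) ^ (p+1) = ((j:ℝ)+1) * ε := by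
      rw [mul_assoc, ← Real.rpow_add hx0, show -p + (p+1) = 1 by ring, Real.rpow_one, mul_comm]
    have h4 := mul_lt_mul_of_pos_right h2 (by positivity : 0 < ((j:ℝ)+1) ^ (p+1))
    linarith
  filter_upwards [eventually_ge_atTop J'] with j hj
  induction j, hj using Nat.le_induction with
  | base =>
    refine hJ'.trans (mul_le_mul_of_nonneg_right ?_ (by have := X_ge J'; positivity))
    nlinarith
  | succ j hj ih =>
    push_cast
    rw [show (j:ℝ) + 1 + 1 = (j:ℝ) + 2 by ring]
    have hX := X_ge j
    have hx0 : 0 < (j:ℝ) + 1 := by linarith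
    have hx2 : 0 < (j:ℝ) + 2 := by linarith
    rcases le_total (y j) (ε * ((j:ℝ)+1) ^ (-p)) with h | h
    · exact (hJ j (by omega)).2 h
    · have h1 := (hJ j (by omega)).1 h
      have h2 : y j * ((j:ℝ)+1) ^ (p+1) ≤ 2 * 2 ^ p * ε * ((j:ℝ)+1) := by
        have := mul_le_mul_of_nonneg_right ih (by positivity : 0 ≤ ((j:ℝ)+1) ^ (p+1))
        rwa [mul_assoc (2 * 2 ^ p * ε), ← Real.rpow_add hx0, show -p + (p+1) = 1 by ring,
          Real.rpow_one] at this
      have h3 : 2 * 2 ^ p * ε * ((j:ℝ)+1) ≤ 2 * 2 ^ p * ε * ((j:ℝ)+2) :=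
        mul_le_mul_of_nonneg_left (by linarith) (by positivity)
      have h4 : y (j+1) * ((j:ℝ)+2) ^ (p+1) ≤
          2 * 2 ^ p * ε * ((j:ℝ)+2) ^ (-p) * ((j:ℝ)+2) ^ (p+1) := by
        rw [mul_assoc (2 * 2 ^ p * ε), ← Real.rpow_add hx2, show -p + (p+1) = 1 by ring,
          Real.rpow_one]
        linarith
      exact le_of_mul_le_mul_right h4 (by positivity)

lemma lower_rate (r μ M c : ℝ) (hr : 1 < r) (hμ1 : 1 < μ) (hμ2 : μ ≤ 2)
    (hM : 1 ≤ M) (hc : 0 < c) (y g e : ℕ → ℝ) (hg : ∀ j, 0 ≤ g j)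
    (hy : Tendsto y atTop (nhds 0))
    (hstep : ∀ᶠ j in atTop, y (j+1) ≤ y j - c * g j ^ 2 + e j)
    (he : ∀ ε > 0, ∀ᶠ j : ℕ in atTop, e j ≤ ε * ((j:ℝ)+1) ^ (-(2*r)))
    (hloj : ∀ᶠ j in atTop, |y j| ≤ M * g j ^ μ) (ε : ℝ) (hε : 0 < ε) :
    ∀ᶠ j : ℕ in atTop, -(ε * ((j:ℝ)+1) ^ (-(μ*r))) ≤ y j := by
  obtain ⟨κ, hκ, hk⟩ := rate_step r μ M c ε hμ1 hμ2 hM hc hε y g e hg hstep he hloj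
  obtain ⟨J, hJ⟩ := eventually_atTop.1 hk
  filter_upwards [eventually_ge_atTop J] with j hj
  by_contra! hcon
  have hrem : ∀ i ≥ j, y i ≤ y j ∧ y i ≤ -(ε * ((i:ℝ)+1) ^ (-(μ*r))) := by
    intro i hi
    induction i, hi using Nat.le_induction with
    | base => exact ⟨le_rfl, hcon.le⟩
    | succ i hi ih =>
      have hX := X_ge i
      have hx0 : 0 < (i:ℝ) + 1 := by linarith
      have h1 := hJ i (by omega) (by linarith [neg_le_abs (y i)])
      have h2 : 0 ≤ κ * |y i| * ((i:ℝ)+1) ^ (-(r*(2-μ))) := by positivity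
      refine ⟨by linarith, ?_⟩
      have h3 : (((i+1:ℕ):ℝ)+1) ^ (-(μ*r)) ≤ ((i:ℝ)+1) ^ (-(μ*r)) := by
        refine Real.rpow_le_rpow_of_nonpos hx0 (by push_cast; linarith) ?_
        have : 0 < μ * r := by positivity
        linarith
      have := mul_le_mul_of_nonneg_left h3 hε.le
      linarith [ih.2]
  have hneg : y j < 0 := by
    have : 0 < ε * ((j:ℝ)+1) ^ (-(μ*r)) := by have := X_ge j; positivity
    linarith
  have : (0:ℝ) ≤ y j := le_of_tendsto hy (by
    filter_upwards [eventually_ge_atTop j] with i hi using (hrem i hi).1)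
  linarith

lemma abs_rate (r μ M c : ℝ) (hr : 1 < r) (hμ1 : 1 < μ) (hμ2 : μ ≤ 2) (hs : r * (2-μ) < 1)
    (hM : 1 ≤ M) (hc : 0 < c) (y g e : ℕ → ℝ) (hg : ∀ j, 0 ≤ g j)
    (hy : Tendsto y atTop (nhds 0))
    (hstep : ∀ᶠ j in atTop, y (j+1) ≤ y j - c * g j ^ 2 + e j)
    (he : ∀ ε > 0, ∀ᶠ j : ℕ in atTop, e j ≤ ε * ((j:ℝ)+1) ^ (-(2*r)))
    (hloj : ∀ᶠ j in atTop, |y j| ≤ M * g j ^ μ) (ε : ℝ) (hε : 0 < ε) :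
    ∀ᶠ j : ℕ in atTop, |y j| ≤ ε * ((j:ℝ)+1) ^ (-(μ*r)) := by
  have h2 : (0:ℝ) < 2 * 2 ^ (μ*r) := by positivity
  filter_upwards [lower_rate r μ M c hr hμ1 hμ2 hM hc y g e hg hy hstep he hloj ε hε,
    upper_rate r μ M c hr hμ1 hμ2 hs hM hc y g e hg hstep he hloj (ε / (2 * 2 ^ (μ*r)))
      (by positivity)] with j h1 h3
  rw [mul_div_cancel₀ _ h2.ne'] at h3
  exact abs_le.2 ⟨h1, h3⟩

lemma grad_rate (r μ M c : ℝ) (hr : 1 < r) (hμ1 : 1 < μ) (hμ2 : μ ≤ 2) (hs : r * (2-μ) < 1)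
    (hM : 1 ≤ M) (hc : 0 < c) (y g e : ℕ → ℝ) (hg : ∀ j, 0 ≤ g j)
    (hy : Tendsto y atTop (nhds 0))
    (hstep : ∀ᶠ j in atTop, y (j+1) ≤ y j - c * g j ^ 2 + e j)
    (he : ∀ ε > 0, ∀ᶠ j : ℕ in atTop, e j ≤ ε * ((j:ℝ)+1) ^ (-(2*r)))
    (hloj : ∀ᶠ j in atTop, |y j| ≤ M * g j ^ μ) (ε : ℝ) (hε : 0 < ε) :
    ∀ᶠ j : ℕ in atTop, g j ^ 2 ≤ ε * ((j:ℝ)+1) ^ (-(μ*r)) := by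
  have hab := abs_rate r μ M c hr hμ1 hμ2 hs hM hc y g e hg hy hstep he hloj (c*ε/3) (by positivity)
  filter_upwards [hab, (tendsto_add_atTop_nat 1).eventually hab, hstep,
    he (c*ε/3) (by positivity)] with j h1 h2 h3 h4
  have hX := X_ge j
  have hx0 : 0 < (j:ℝ) + 1 := by linarith
  have hpp : 0 < μ * r := by positivity
  have a3 : (((j+1:ℕ):ℝ)+1) ^ (-(μ*r)) ≤ ((j:ℝ)+1) ^ (-(μ*r)) :=
    Real.rpow_le_rpow_of_nonpos hx0 (by push_cast; linarith) (by linarith)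
  have a1 : ((j:ℝ)+1) ^ (-(2*r)) ≤ ((j:ℝ)+1) ^ (-(μ*r)) :=
    Real.rpow_le_rpow_of_exponent_le hX (by nlinarith)
  have hce : 0 ≤ c*ε/3 := by positivity
  have b1 := mul_le_mul_of_nonneg_left a1 hce
  have b3 := mul_le_mul_of_nonneg_left a3 hce
  have c1 := (abs_le.1 h1).2
  have c2 := (abs_le.1 h2).1
  have : c * g j ^ 2 ≤ c * (ε * ((j:ℝ)+1) ^ (-(μ*r))) := by linarith
  exact le_of_mul_le_mul_left this hc

lemma dist_le_of_telescope {E : Type*} [NormedAddCommGroup E] (x : ℕ → E) (l : E)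
    (B : ℕ → ℝ) (J : ℕ) (hB : ∀ j ≥ J, 0 ≤ B j) (hx : Tendsto x atTop (nhds l))
    (h : ∀ j ≥ J, ‖x (j+1) - x j‖ ≤ B j - B (j+1)) : ∀ j ≥ J, ‖x j - l‖ ≤ B j := by
  intro j hj
  have h1 : ∀ i ≥ j, ‖x j - x i‖ ≤ B j - B i := by
    intro i hi
    induction i, hi using Nat.le_induction with
    | base => simp
    | succ i hi ih =>
      have := h i (by omega)
      have h2 := norm_sub_le_norm_sub_add_norm_sub (x j) (x i) (x (i+1))
      rw [norm_sub_rev (x i)] at h2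
      linarith
  refine le_of_tendsto (tendsto_const_nhds.sub hx).norm ?_
  filter_upwards [eventually_ge_atTop j] with i hi
  linarith [h1 i hi, hB i (by omega)]

lemma dist_rate {E : Type*} [NormedAddCommGroup E] (x : ℕ → E) (l : E)
    (hx : Tendsto x atTop (nhds l)) (r c K : ℝ) (hr : 1 < r) (hc : 0 < c) (hK : 0 < K)
    (g η : ℕ → ℝ)
    (hstep : ∀ᶠ j in atTop, ‖x (j+1) - x j‖ ≤ K * (g j + η j))
    (hη : ∀ ε > 0, ∀ᶠ j : ℕ in atTop, η j ≤ ε * ((j:ℝ)+1) ^ (-r))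
    (hV : ∀ δ > 0, ∃ V : ℕ → ℝ, ∀ᶠ j : ℕ in atTop, 0 ≤ V j ∧ V j ≤ δ * ((j:ℝ)+1) ^ (1-2*r) ∧
      V (j+1) ≤ V j - c * g j ^ 2) (ε : ℝ) (hε : 0 < ε) :
    ∀ᶠ j : ℕ in atTop, ‖x j - l‖ ≤ ε * ((j:ℝ)+1) ^ (1-r) := by
  -- constants
  set Cr := ((r-1) * 2 ^ (-(r-1+1)))⁻¹ with hCr
  have hr1 : 0 < r - 1 := by linarith
  have hCr0 : 0 < Cr := by positivity
  set ε1 := ε / (3*K*Cr + 1) with hε1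
  have hε10 : 0 < ε1 := by positivity
  set C := r * 2 ^ (r-1) with hC
  have hC0 : 0 < C := by positivity
  set A := 1 / (4*ε1*c) with hA
  have hA0 : 0 < A := by positivity
  set δ := min (4*ε1^2*c/C) (ε1/(K*A)) with hδ
  have hδ0 : 0 < δ := by positivity
  obtain ⟨V, hVe⟩ := hV δ hδ0
  obtain ⟨J, hJ⟩ := eventually_atTop.1 (hVe.and (hstep.and (hη ε1 hε10)))
  set B : ℕ → ℝ := fun j => 3*K*Cr*ε1 * ((j:ℝ)+1) ^ (1-r) + K*A*(((j:ℝ)+1) ^ r * V j) with hB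
  have hmain := dist_le_of_telescope x l B J ?_ hx ?_
  · filter_upwards [eventually_ge_atTop J] with j hj
    refine (hmain j hj).trans ?_
    obtain ⟨⟨v0, v1, _⟩, _⟩ := hJ j hj
    have hX := X_ge j
    have hx0 : 0 < (j:ℝ) + 1 := by linarith
    have e1 : ((j:ℝ)+1) ^ r * ((j:ℝ)+1) ^ (1-2*r) = ((j:ℝ)+1) ^ (1-r) := by
      rw [← Real.rpow_add hx0]; congr 1; ring
    have h1 : ((j:ℝ)+1) ^ r * V j ≤ ε1/(K*A) * ((j:ℝ)+1) ^ (1-r) := by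
      rw [← e1]
      have h2 : V j ≤ ε1/(K*A) * ((j:ℝ)+1) ^ (1-2*r) :=
        v1.trans (mul_le_mul_of_nonneg_right (min_le_right _ _) (by positivity))
      have := mul_le_mul_of_nonneg_left h2 (by positivity : 0 ≤ ((j:ℝ)+1) ^ r)
      linarith
    have h2 := mul_le_mul_of_nonneg_left h1 (by positivity : 0 ≤ K*A)
    have e2 : K*A*(ε1/(K*A) * ((j:ℝ)+1) ^ (1-r)) = ε1 * ((j:ℝ)+1) ^ (1-r) := by
      field_simp
    have e3 : ε * ((j:ℝ)+1) ^ (1-r) = (3*K*Cr+1) * ε1 * ((j:ℝ)+1) ^ (1-r) := by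
      rw [hε1, mul_div_cancel₀ _ (by positivity)]
    rw [e3]
    simp only [hB]
    linarith
  · intro j hj
    have hX := X_ge j
    have hx0 : 0 < (j:ℝ) + 1 := by linarith
    have := (hJ j hj).1.1
    simp only [hB]
    positivity
  · intro j hj
    obtain ⟨⟨v0, v1, v2⟩, s1, s2⟩ := hJ j hj
    obtain ⟨⟨w0, -⟩, -⟩ := hJ (j+1) (by omega)
    have hX := X_ge j
    have d1 := rpow_neg_diff (r-1) _ hr1 hX
    have d2 := rpow_diff r _ hr.le hX
    simp only [hB]
    push_cast
    set X := (j:ℝ) + 1 with hXdef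
    have hx0 : 0 < X := by linarith
    rw [show -(r-1) = 1 - r by ring] at d1
    have d1' : X ^ (-r) ≤ Cr * (X ^ (1-r) - (X+1) ^ (1-r)) := by
      rw [hCr, inv_mul_eq_div, le_div_iff₀ (by positivity)]
      calc X ^ (-r) * ((r-1) * 2 ^ (-(r-1+1))) = (r-1) * 2 ^ (-(r-1+1)) * X ^ (-(r-1+1)) := by
            rw [mul_comm]; congr 2; ring
        _ ≤ _ := d1
    -- potential drop
    have hc2 : 0 ≤ c * g j ^ 2 := by positivity
    have e1 : X ^ (r-1) * X ^ (1-2*r) = X ^ (-r) := by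
      rw [← Real.rpow_add hx0]; congr 1; ring
    have f1 : ((X+1) ^ r - X ^ r) * V (j+1) ≤ C * δ * X ^ (-r) := by
      calc ((X+1) ^ r - X ^ r) * V (j+1) ≤ (C * X ^ (r-1)) * V (j+1) :=
            mul_le_mul_of_nonneg_right d2 w0
        _ ≤ (C * X ^ (r-1)) * (δ * X ^ (1-2*r)) :=
            mul_le_mul_of_nonneg_left (by linarith) (by positivity)
        _ = C * δ * (X ^ (r-1) * X ^ (1-2*r)) := by ring
        _ = _ := by rw [e1]
    have f2 : C * δ ≤ 4*ε1^2*c := by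
      have : δ ≤ 4*ε1^2*c/C := min_le_left _ _
      rw [le_div_iff₀ hC0] at this
      linarith
    have f3 : X ^ r * (c * g j ^ 2) ≤ X ^ r * (V j - V (j+1)) :=
      mul_le_mul_of_nonneg_left (by linarith) (by positivity)
    have f4 : X ^ r * (c * g j ^ 2) ≤ X ^ r * V j - (X+1) ^ r * V (j+1) + 4*ε1^2*c * X ^ (-r) := by
      have := mul_le_mul_of_nonneg_right f2 (by positivity : 0 ≤ X ^ (-r))
      linarith
    have f5 : g j ≤ ε1 * X ^ (-r) + A * (X ^ r * (c * g j ^ 2)) := by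
      rw [Real.rpow_neg hx0.le, hA]
      have hp : 0 < X ^ r := by positivity
      generalize X ^ r = Y at hp ⊢
      have : ε1 * Y⁻¹ + 1 / (4*ε1*c) * (Y * (c * g j ^ 2)) - g j
          = (2*ε1 - Y * g j) ^ 2 / (4*ε1*Y) := by
        field_simp; ring
      have h0 : 0 ≤ (2*ε1 - Y * g j) ^ 2 / (4*ε1*Y) := by positivity
      linarith
    have f6 : A * (4*ε1^2*c * X ^ (-r)) = ε1 * X ^ (-r) := by
      rw [hA]; field_simp
    have f7 := mul_le_mul_of_nonneg_left f4 hA0.le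
    have f8 : g j + η j ≤ 3 * ε1 * X ^ (-r) + A * (X ^ r * V j - (X+1) ^ r * V (j+1)) := by
      linarith
    have f9 := mul_le_mul_of_nonneg_left d1' (by positivity : 0 ≤ 3*ε1)
    have f10 : g j + η j ≤ 3*ε1*(Cr * (X ^ (1-r) - (X+1) ^ (1-r)))
        + A * (X ^ r * V j - (X+1) ^ r * V (j+1)) := by linarith
    have f11 := mul_le_mul_of_nonneg_left f10 hK.le
    linarith

lemma eventually_of_blocks (N : ℕ → ℕ) (hN : StrictMono N) (Q : ℕ → Prop)
    (h : ∀ᶠ j in atTop, ∀ n, N j ≤ n → n ≤ N (j+1) → Q n) : ∀ᶠ n in atTop, Q n := by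
  obtain ⟨J, hJ⟩ := eventually_atTop.1 h
  filter_upwards [eventually_ge_atTop (N J)] with n hn
  have : ∃ j ≥ J, N j ≤ n ∧ n ≤ N (j+1) := by
    induction n, hn using Nat.le_induction with
    | base => exact ⟨J, le_rfl, le_rfl, (hN (Nat.lt_succ_self J)).le⟩
    | succ n hn ih =>
      obtain ⟨j, hj, h1, h2⟩ := ih
      rcases h2.eq_or_lt with h3 | h3
      · have := hN (Nat.lt_succ_self (j+1))
        exact ⟨j+1, by omega, by omega, by simp at this; omega⟩
      · exact ⟨j, hj, by omega, by omega⟩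
  obtain ⟨j, hj, h1, h2⟩ := this
  exact hJ j hj n h1 h2

lemma transfer (N : ℕ → ℕ) (hN : StrictMono N) (γ : ℕ → ℝ) (K p : ℝ) (hK : 0 < K) (hp : 0 ≤ p)
    (hγ : ∀ (j : ℕ) n, n ≤ N (j+1) → γ n ≤ K * (j+1))
    (hγ0 : ∀ᶠ n in atTop, 0 < γ n) (F : ℕ → ℝ) (hF : ∀ n, 0 ≤ F n)
    (h : ∀ ε > 0, ∀ᶠ j : ℕ in atTop, ∀ n, N j ≤ n → n ≤ N (j+1) →
      F n ≤ ε * ((j:ℝ)+1) ^ (-p)) :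
    F =o[atTop] fun n => γ n ^ (-p) := by
  rw [isLittleO_iff]
  intro ε hε
  have hKp : 0 < K ^ (-p) := by positivity
  have h1 : ∀ᶠ n in atTop, 0 < γ n → F n ≤ ε * γ n ^ (-p) := by
    refine eventually_of_blocks N hN _ ?_
    filter_upwards [h (ε * K ^ (-p)) (by positivity)] with j hj n hn1 hn2 hpos
    refine (hj n hn1 hn2).trans ?_
    have hX := X_ge j
    rw [mul_assoc, ← Real.mul_rpow hK.le (by linarith)]
    exact mul_le_mul_of_nonneg_left
      (Real.rpow_le_rpow_of_nonpos hpos (hγ j n hn2) (by linarith)) hε.le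
  filter_upwards [h1, hγ0] with n h2 h3
  rw [Real.norm_of_nonneg (hF n), Real.norm_of_nonneg (by positivity)]
  exact h2 h3

set_option maxHeartbeats 4000000 in
theorem path_theorem {E : Type*} [NormedAddCommGroup E] [InnerProductSpace ℝ E] [ProperSpace E]
    [CompleteSpace E]
    (f : E → ℝ) (hfd : Differentiable ℝ f)
    (hlip : LocallyLipschitz (fun x => gradient f x))
    (α γ : ℕ → ℝ) (hαpos : ∀ n, 0 < α n)
    (hα0 : Tendsto α atTop (nhds 0)) (hγ0 : γ 0 = 0)
    (hγ : ∀ n, γ (n+1) = γ n + α n) (hdiv : Tendsto γ atTop atTop) (θ ξ : ℕ → E)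
    (hrec : ∀ n, θ (n + 1) = θ n - α n • (gradient f (θ n) + ξ n))
    (R : ℝ) (hR : ∀ n, ‖θ n‖ ≤ R)
    (r : ℝ) (hr : 1 < r) (ν : ℕ → ℝ)
    (hν : ∀ n k, n ≤ k → γ (k+1) - γ n ≤ 1 →
      ‖∑ i ∈ Finset.Icc n k, (α i * γ i ^ r) • ξ i‖ ≤ ν n)
    (hν0 : ∀ n, 0 ≤ ν n)
    (b : ℝ) (hb : ∀ᶠ n in atTop, ν n ≤ b)
    (hLoj : ∀ Q : Set E, IsCompact Q → ∀ b ∈ f '' Q,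
      ∃ δ μ M : ℝ, δ ∈ Set.Ioc (0 : ℝ) 1 ∧ μ ∈ Set.Ioc (1 : ℝ) 2 ∧ 1 ≤ M ∧
        ∀ x ∈ Q, |f x - b| ≤ δ → |f x - b| ≤ M * ‖gradient f x‖ ^ μ) :
    ∃ l, Tendsto θ atTop (nhds l) ∧ (Tendsto ν atTop (nhds 0) →
      ∀ δ μ M : ℝ, 0 < δ → 1 < μ → μ ≤ 2 → 1 ≤ M → r * (2 - μ) < 1 →
      (∀ y, ‖y - l‖ ≤ δ → |f y - f l| ≤ M * ‖gradient f y‖ ^ μ) →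
      ((fun n => ‖gradient f (θ n)‖ ^ 2) =o[atTop] fun n => γ n ^ (-(μ * r))) ∧
      ((fun n => |f (θ n) - f l|) =o[atTop] fun n => γ n ^ (-(μ * r))) ∧
      ((fun n => ‖θ n - l‖) =o[atTop] fun n => γ n ^ (-(r - 1)))) := by
  set G : E → E := fun x => gradient f x with hGdef
  have hmono : StrictMono γ := strictMono_nat_of_lt_succ (fun n => by linarith [hγ n, hαpos n])
  have hγpos : ∀ n, 1 ≤ n → 0 < γ n := fun n hn => by
    rw [← hγ0]; exact hmono (by omega)
  -- Lipschitz constant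
  set Q : Set E := Metric.closedBall 0 R with hQ
  have hQc : IsCompact Q := isCompact_closedBall 0 R
  have hθQ : ∀ n, θ n ∈ Q := fun n => by rw [hQ, mem_closedBall_zero_iff]; exact hR n
  obtain ⟨L0, hL0⟩ := (hlip.locallyLipschitzOn (s := Q)).exists_lipschitzOnWith_of_compact hQc
  obtain ⟨L, hL, hGL⟩ : ∃ L : ℝ, 0 ≤ L ∧ ∀ x ∈ Q, ∀ y ∈ Q, ‖G x - G y‖ ≤ L * ‖x - y‖ := by
    refine ⟨NNReal.toReal L0, L0.2, fun x hx y hy => ?_⟩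
    have := hL0.dist_le_mul x hx y hy
    rwa [dist_eq_norm, dist_eq_norm] at this
  have hG : ∀ m n, ‖G (θ m) - G (θ n)‖ ≤ L * ‖θ m - θ n‖ := fun m n =>
    hGL _ (hθQ m) _ (hθQ n)
  have hf : ∀ m n, |f (θ m) - f (θ n) - inner ℝ (G (θ n)) (θ m - θ n)| ≤
      L * ‖θ m - θ n‖ ^ 2 := by
    intro m n
    have hseg : segment ℝ (θ n) (θ m) ⊆ Q := (convex_closedBall 0 R).segment_subset (hθQ n) (hθQ m)
    have := Convex.norm_image_sub_le_of_norm_hasFDerivWithin_le' (𝕜 := ℝ) (f := f)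
      (f' := fun x => InnerProductSpace.toDual ℝ E (G x)) (s := segment ℝ (θ n) (θ m))
      (φ := InnerProductSpace.toDual ℝ E (G (θ n))) (C := L * ‖θ m - θ n‖) (x := θ n) (y := θ m)
      (fun x _ => (hfd x).hasGradientAt.hasFDerivAt.hasFDerivWithinAt)
      (fun x hx => by
        rw [← map_sub, LinearIsometryEquiv.norm_map]
        refine (hGL x (hseg hx) _ (hθQ n)).trans (mul_le_mul_of_nonneg_left ?_ hL)
        have := norm_sub_le_of_mem_segment hx
        rwa [norm_sub_rev x, norm_sub_rev (θ m)] at *)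
      (convex_segment _ _) (left_mem_segment ℝ _ _) (right_mem_segment ℝ _ _)
    rw [Real.norm_eq_abs, InnerProductSpace.toDual_apply_apply] at this
    refine this.trans (le_of_eq (by ring))
  -- noise
  set β : ℕ → ℝ := fun n => ν n * γ n ^ (-r) with hβdef
  have hβ : ∀ n i, 1 ≤ n → n ≤ i → γ i - γ n ≤ 1 →
      ‖∑ k ∈ Finset.Ico n i, α k • ξ k‖ ≤ β n := by
    intro n i hn hi h1
    rcases hi.eq_or_lt with h | h
    · subst h
      have := hν0 n
      have := (hγpos n hn).le
      simp only [Finset.Ico_self, Finset.sum_empty, norm_zero, hβdef]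
      positivity
    obtain ⟨k, rfl⟩ : ∃ k, i = k + 1 := ⟨i - 1, by omega⟩
    have hab := abel_bound (fun i => γ i ^ (-r)) (fun i => (α i * γ i ^ r) • ξ i) n (ν n)
      (fun i hi => Real.rpow_le_rpow_of_nonpos (hγpos i (by omega))
        (hmono.monotone (Nat.le_succ i)) (by linarith)) k (by omega)
      (by have := hγpos k (by omega); positivity)
      (fun i h2 h3 => hν n i h2 (by
        have := hmono.monotone (show i + 1 ≤ k + 1 by omega)
        linarith))
    have e : ∑ l ∈ Finset.Icc n k, (fun i => γ i ^ (-r)) l • (fun i => (α i * γ i ^ r) • ξ i) l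
        = ∑ l ∈ Finset.Ico n (k+1), α l • ξ l := by
      refine Finset.sum_congr (by ext; simp) (fun l hl => ?_)
      rw [Finset.mem_Ico] at hl
      have hp := hγpos l (by omega)
      simp only
      rw [smul_smul]
      congr 1
      rw [mul_comm (α l), ← mul_assoc, ← Real.rpow_add hp]
      simp
    rw [e] at hab
    simp only [hβdef]
    linarith
  obtain ⟨N, c, K, hN, hc, hK, hN1, hβ0, hdesc, hclose, hlow, hup⟩ :=
    blocks f G α γ hαpos hα0 hγ0.ge hγ hdiv θ ξ hrec L hL hG hf β hβ
  set x : ℕ → E := fun j => θ (N j) with hx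
  set g : ℕ → ℝ := fun j => ‖G (x j)‖ with hg
  set η : ℕ → ℝ := fun j => β (N j) with hη
  have hg0 : ∀ j, 0 ≤ g j := fun j => norm_nonneg _
  set D := (c/2) ^ (-r) with hD
  have hD0 : 0 < D := by positivity
  have hηb : ∀ b', (∀ᶠ n in atTop, ν n ≤ b') →
      ∀ᶠ j : ℕ in atTop, η j ≤ b' * D * ((j:ℝ)+1) ^ (-r) := by
    intro b' hb'
    filter_upwards [hN.tendsto_atTop.eventually hb', eventually_ge_atTop 1] with j h1 h2
    have hj : (1:ℝ) ≤ j := by exact_mod_cast h2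
    have h3 : c/2 * ((j:ℝ)+1) ≤ γ (N j) := by
      have := hlow j
      nlinarith
    have h4 : γ (N j) ^ (-r) ≤ (c/2 * ((j:ℝ)+1)) ^ (-r) :=
      Real.rpow_le_rpow_of_nonpos (by positivity) h3 (by linarith)
    rw [Real.mul_rpow (by positivity) (by positivity)] at h4
    have h5 := hγpos (N j) (hN1 j)
    calc η j = ν (N j) * γ (N j) ^ (-r) := rfl
      _ ≤ b' * γ (N j) ^ (-r) := mul_le_mul_of_nonneg_right h1 (by positivity)
      _ ≤ b' * (D * ((j:ℝ)+1) ^ (-r)) := mul_le_mul_of_nonneg_left h4 ((hν0 _).trans h1)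
      _ = _ := by ring
  have hsq : ∀ j : ℕ, (((j:ℝ)+1) ^ (-r)) ^ 2 = ((j:ℝ)+1) ^ (-(2*r)) := by
    intro j
    have := X_ge j
    rw [← Real.rpow_natCast, ← Real.rpow_mul (by linarith)]
    congr 1; push_cast; ring
  have hηb2 : ∀ B', (∀ᶠ j : ℕ in atTop, η j ≤ B' * ((j:ℝ)+1) ^ (-r)) →
      ∀ᶠ j : ℕ in atTop, η j ^ 2 ≤ B' ^ 2 * ((j:ℝ)+1) ^ (-(2*r)) := by
    intro B' h
    filter_upwards [h] with j h1
    rw [← hsq, ← mul_pow]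
    exact pow_le_pow_left₀ (hβ0 j) h1 2
  have hηB := hηb b hb
  -- function values converge
  obtain ⟨Cp, hCp, hpot⟩ := potential r hr
  set K1 := K * (b * D) ^ 2 with hK1
  have hK10 : 0 ≤ K1 := by positivity
  obtain ⟨J, hJ⟩ := eventually_atTop.1 (hηb2 _ hηB)
  have hstepu : ∀ u0 : ℝ, ∀ j ≥ J, (f (x (j+1)) - u0) ≤ (f (x j) - u0) - c * g j ^ 2
      + K1 * ((j:ℝ)+1) ^ (-(2*r)) := by
    intro u0 j hj
    have h1 := hdesc j
    have h2 := mul_le_mul_of_nonneg_left (hJ j hj) hK.le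
    rw [← mul_assoc] at h2
    simp only [hx, hg, hη, hK1] at *
    linarith
  obtain ⟨us, hus⟩ : ∃ us, Tendsto (fun j => f (x j)) atTop (nhds us) := by
    have hv := hpot (fun j => f (x j)) (fun j => c * g j ^ 2) K1 J hK10
      (fun j hj => by have := hstepu 0 j hj; simpa using this)
    obtain ⟨m, hm⟩ := hQc.bddBelow_image hfd.continuous.continuousOn
    obtain ⟨v, hv⟩ := tail_conv (fun j : ℕ => f (x j) + Cp * K1 * ((j:ℝ)+1) ^ (1-2*r)) J m
      (fun j => by
        have h1 : m ≤ f (x j) := hm ⟨_, hθQ _, rfl⟩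
        have := X_ge j
        have : 0 ≤ Cp * K1 * ((j:ℝ)+1) ^ (1-2*r) := by positivity
        linarith)
      (fun j hj => by
        have h1 := hv j hj
        have : 0 ≤ c * g j ^ 2 := by positivity
        linarith)
    refine ⟨v - Cp * K1 * 0, ?_⟩
    have := hv.sub ((X_rpow_tendsto (1-2*r) (by linarith)).const_mul (Cp * K1))
    simpa using this
  have husQ : us ∈ f '' Q :=
    (hQc.image hfd.continuous).isClosed.mem_of_tendsto hus
      (Eventually.of_forall (fun j => ⟨_, hθQ _, rfl⟩))
  have hy : Tendsto (fun j => f (x j) - us) atTop (nhds 0) := by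
    simpa using hus.sub_const us
  have hgsum : Summable g := by
    obtain ⟨δ, μ, M, hδ, hμ, hM, hl⟩ := hLoj Q hQc us husQ
    refine summable_grad r hr (fun j => f (x j) - us) g c K1 M μ J hc hK10 hM hμ.1 hg0 hy
      (hstepu us) ?_
    filter_upwards [(tendsto_order.1 hy.abs).2 δ (by simpa using hδ.1)] with j hj
    exact hl _ (hθQ _) hj.le
  have hηsum : Summable η := by
    have h1 : Summable (fun n : ℕ => ((n:ℝ)) ^ (-r)) := by
      rw [Real.summable_nat_rpow]; linarith
    have h2 := ((summable_nat_add_iff 1).2 h1).mul_left (b * D)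
    refine Summable.of_norm_bounded_eventually_nat h2 ?_
    filter_upwards [hηB] with j hj
    rw [Real.norm_of_nonneg (hβ0 j)]
    push_cast
    exact hj
  have hxstep : ∀ j, ‖x (j+1) - x j‖ ≤ K * (g j + η j) := fun j =>
    hclose j (N (j+1)) (hN (Nat.lt_succ_self j)).le le_rfl
  have hcau : CauchySeq x := by
    refine cauchySeq_of_summable_dist ?_
    refine Summable.of_nonneg_of_le (fun _ => dist_nonneg) (fun j => ?_)
      ((hgsum.add hηsum).mul_left K)
    rw [dist_comm, dist_eq_norm]
    exact hxstep j
  obtain ⟨l, hl⟩ := cauchySeq_tendsto_of_complete hcau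
  have hdist0 : Tendsto (fun j => K * (g j + η j) + ‖x j - l‖) atTop (nhds 0) := by
    have h1 := (hgsum.tendsto_atTop_zero.add hηsum.tendsto_atTop_zero).const_mul K
    have h2 := (hl.sub_const l).norm
    simpa using h1.add h2
  have hθl : Tendsto θ atTop (nhds l) := by
    rw [Metric.tendsto_atTop']
    intro ε hε
    have : ∀ᶠ n in atTop, dist (θ n) l < ε := by
      refine eventually_of_blocks N hN _ ?_
      filter_upwards [(tendsto_order.1 hdist0).2 ε hε] with j hj n h1 h2
      rw [dist_eq_norm]
      have h3 := norm_sub_le_norm_sub_add_norm_sub (θ n) (x j) l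
      have h4 := hclose j n h1 h2
      exact lt_of_le_of_lt (by simp only [hx, hg, hη] at *; linarith) hj
    obtain ⟨n0, hn0⟩ := eventually_atTop.1 this
    exact ⟨n0, fun n hn => hn0 n hn.le⟩
  refine ⟨l, hθl, ?_⟩
  intro hν1 δ μ M hδ hμ1 hμ2 hM hs hloc
  have hfl : f l = us :=
    tendsto_nhds_unique ((hfd.continuous.tendsto l).comp hl) hus
  rw [← hfl] at hy
  have hloj : ∀ᶠ j in atTop, |f (x j) - f l| ≤ M * g j ^ μ := by
    have h2 := (hl.sub_const l).norm
    rw [sub_self, norm_zero] at h2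
    filter_upwards [(tendsto_order.1 h2).2 δ hδ] with j hj
    exact hloc _ hj.le
  have hηo : ∀ ε > 0, ∀ᶠ j : ℕ in atTop, η j ≤ ε * ((j:ℝ)+1) ^ (-r) := by
    intro ε hε
    have := hηb (ε / D) (hν1.eventually (eventually_le_nhds (by positivity)))
    rwa [div_mul_cancel₀ _ hD0.ne'] at this
  have hη2o : ∀ ε > 0, ∀ᶠ j : ℕ in atTop, η j ^ 2 ≤ ε * ((j:ℝ)+1) ^ (-(2*r)) := by
    intro ε hε
    have := hηb2 _ (hηo (Real.sqrt ε) (by positivity))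
    rwa [Real.sq_sqrt hε.le] at this
  have heo : ∀ ε > 0, ∀ᶠ j : ℕ in atTop, K * η j ^ 2 ≤ ε * ((j:ℝ)+1) ^ (-(2*r)) := by
    intro ε hε
    filter_upwards [hη2o (ε/K) (by positivity)] with j hj
    have := mul_le_mul_of_nonneg_left hj hK.le
    rwa [← mul_assoc, mul_div_cancel₀ _ hK.ne'] at this
  have hstep : ∀ᶠ j in atTop, (f (x (j+1)) - f l) ≤ (f (x j) - f l) - c * g j ^ 2 + K * η j ^ 2 :=
    Eventually.of_forall (fun j => by have := hdesc j; simp only [hx, hg, hη] at *; linarith)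
  have hyo := abs_rate r μ M c hr hμ1 hμ2 hs hM hc (fun j => f (x j) - f l) g
    (fun j => K * η j ^ 2) hg0 hy hstep heo hloj
  have hgo := grad_rate r μ M c hr hμ1 hμ2 hs hM hc (fun j => f (x j) - f l) g
    (fun j => K * η j ^ 2) hg0 hy hstep heo hloj
  have hexp : ∀ j : ℕ, ((j:ℝ)+1) ^ (-(μ*r)) ≤ ((j:ℝ)+1) ^ (1-2*r) := fun j =>
    Real.rpow_le_rpow_of_exponent_le (X_ge j) (by linarith)
  have hexp2 : ∀ j : ℕ, ((j:ℝ)+1) ^ (-(2*r)) ≤ ((j:ℝ)+1) ^ (-(μ*r)) := fun j =>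
    Real.rpow_le_rpow_of_exponent_le (X_ge j) (by nlinarith)
  have hdo := dist_rate x l hl r c K hr hc hK g η (Eventually.of_forall hxstep) hηo (by
    intro δ' hδ'
    set k := δ' / (2 * Cp) with hk
    have hk0 : 0 < k := by positivity
    obtain ⟨J', hJ'⟩ := eventually_atTop.1 (heo k hk0)
    have hV := hpot (fun j => f (x j) - f l) (fun j => c * g j ^ 2) k J' hk0.le
      (fun j hj => by
        have h1 := hdesc j
        have h2 := hJ' j hj
        simp only [hx, hg, hη] at *
        linarith)
    set V : ℕ → ℝ := fun j => (f (x j) - f l) + Cp * k * ((j:ℝ)+1) ^ (1-2*r) with hVd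
    have hVt : Tendsto V atTop (nhds 0) := by
      have := hy.add ((X_rpow_tendsto (1-2*r) (by linarith)).const_mul (Cp*k))
      simpa using this
    have hV0 := tail_nonneg V J' 0 hVt (fun j hj => by
      have h1 := hV j hj
      have : 0 ≤ c * g j ^ 2 := by positivity
      simp only [hVd] at h1 ⊢
      linarith)
    refine ⟨V, ?_⟩
    filter_upwards [eventually_ge_atTop J', hyo (δ'/2) (by positivity)] with j h1 h2
    refine ⟨hV0 j h1, ?_, hV j h1⟩
    have h3 := mul_le_mul_of_nonneg_left (hexp j) (by positivity : 0 ≤ δ'/2)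
    have h4 := le_abs_self (f (x j) - f l)
    have h5 : Cp * k = δ' / 2 := by rw [hk]; field_simp
    simp only [hVd]
    rw [h5]
    linarith)
  -- squared displacement inside a block
  have hDo : ∀ ε > 0, ∀ᶠ j : ℕ in atTop,
      (K * (g j + η j)) ^ 2 ≤ ε * ((j:ℝ)+1) ^ (-(μ*r)) := by
    intro ε hε
    filter_upwards [hgo (ε / (4*K^2)) (by positivity), hη2o (ε / (4*K^2)) (by positivity)]
      with j h1 h2
    have h3 := mul_le_mul_of_nonneg_left (hexp2 j) (by positivity : 0 ≤ ε / (4*K^2))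
    have h4 : (K * (g j + η j)) ^ 2 ≤ 2 * K^2 * (g j ^ 2 + η j ^ 2) := by
      nlinarith [mul_nonneg (sq_nonneg K) (sq_nonneg (g j - η j))]
    have h5 := mul_le_mul_of_nonneg_left (add_le_add h1 (h2.trans h3))
      (by positivity : 0 ≤ 2 * K^2)
    have h6 : 2 * K^2 * (ε / (4*K^2) * ((j:ℝ)+1) ^ (-(μ*r)) + ε / (4*K^2) * ((j:ℝ)+1) ^ (-(μ*r)))
        = ε * ((j:ℝ)+1) ^ (-(μ*r)) := by field_simp; ring
    linarith
  have hγev : ∀ᶠ n in atTop, 0 < γ n := by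
    filter_upwards [eventually_ge_atTop 1] with n hn using hγpos n hn
  have hp0 : 0 ≤ μ * r := by positivity
  refine ⟨?_, ?_, ?_⟩
  · refine transfer N hN γ K (μ*r) hK hp0 hup hγev _ (fun n => by positivity) ?_
    intro ε hε
    filter_upwards [hgo (ε/4) (by positivity), hDo (ε/(4*(L^2+1))) (by positivity)]
      with j h1 h2 n hn1 hn2
    have h3 := hclose j n hn1 hn2
    have h4 := hG n (N j)
    have hD1 : 0 ≤ K * (g j + η j) := (norm_nonneg _).trans h3
    have h5 : ‖G (θ n)‖ ≤ g j + L * (K * (g j + η j)) := by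
      have a1 := norm_le_insert' (G (θ n)) (G (θ (N j)))
      have a2 := mul_le_mul_of_nonneg_left h3 hL
      simp only [hg, hη, hx]
      linarith
    set d := K * (g j + η j) with hd
    have h6 : ‖G (θ n)‖ ^ 2 ≤ 2 * g j ^ 2 + 2 * (L^2+1) * d ^ 2 := by
      have := pow_le_pow_left₀ (norm_nonneg _) h5 2
      nlinarith [sq_nonneg (g j - L * d), sq_nonneg d]
    have h7 := mul_le_mul_of_nonneg_left h2 (by positivity : 0 ≤ 2 * (L^2+1))
    have h8 : 2 * (L^2+1) * (ε/(4*(L^2+1)) * ((j:ℝ)+1) ^ (-(μ*r))) =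
      ε / 2 * ((j:ℝ)+1) ^ (-(μ*r)) := by field_simp; ring
    linarith
  · refine transfer N hN γ K (μ*r) hK hp0 hup hγev _ (fun n => abs_nonneg _) ?_
    intro ε hε
    filter_upwards [hgo (ε/3) (by positivity), hDo (ε/(3*(L+1))) (by positivity),
      hyo (ε/3) (by positivity)] with j h1 h2 h9 n hn1 hn2
    have h3 := hclose j n hn1 hn2
    have h4 := hf n (N j)
    have hD1 : 0 ≤ K * (g j + η j) := (norm_nonneg _).trans h3
    have h5 := abs_real_inner_le_norm (G (θ (N j))) (θ n - θ (N j))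
    change ‖θ n - x j‖ ≤ K * (g j + η j) at h3
    change |f (θ n) - f (x j) - inner ℝ (G (x j)) (θ n - x j)| ≤ L * ‖θ n - x j‖ ^ 2 at h4
    change |inner ℝ (G (x j)) (θ n - x j)| ≤ g j * ‖θ n - x j‖ at h5
    set d := K * (g j + η j) with hd
    have h6 : g j * ‖θ n - x j‖ ≤ g j ^ 2 + d ^ 2 := by
      have := mul_le_mul_of_nonneg_left h3 (hg0 j)
      nlinarith [sq_nonneg (g j - d), sq_nonneg (g j), sq_nonneg d]
    have h7 : L * ‖θ n - x j‖ ^ 2 ≤ L * d ^ 2 :=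
      mul_le_mul_of_nonneg_left (pow_le_pow_left₀ (norm_nonneg _) h3 2) hL
    have h10 := mul_le_mul_of_nonneg_left h2 (by positivity : 0 ≤ L+1)
    have h8 : (L+1) * (ε/(3*(L+1)) * ((j:ℝ)+1) ^ (-(μ*r))) =
      ε / 3 * ((j:ℝ)+1) ^ (-(μ*r)) := by field_simp
    rw [abs_le] at h4 h5 h9 ⊢
    constructor <;> linarith [h4.1, h4.2, h5.1, h5.2, h9.1, h9.2]
  · refine transfer N hN γ K (r-1) hK (by linarith) hup hγev _ (fun n => norm_nonneg _) ?_
    intro ε hε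
    filter_upwards [hDo ((ε/2)^2) (by positivity), hdo (ε/2) (by positivity)]
      with j h1 h2 n hn1 hn2
    have h3 := hclose j n hn1 hn2
    have hX := X_ge j
    have h4 : K * (g j + η j) ≤ ε/2 * ((j:ℝ)+1) ^ (1-r) := by
      refine le_of_sq_le_sq ?_ (by positivity)
      refine h1.trans ?_
      rw [mul_pow]
      refine mul_le_mul_of_nonneg_left ?_ (by positivity)
      rw [← Real.rpow_natCast, ← Real.rpow_mul (by linarith)]
      refine Real.rpow_le_rpow_of_exponent_le hX ?_
      push_cast
      linarith
    have h5 := norm_sub_le_norm_sub_add_norm_sub (θ n) (x j) l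
    rw [show -(r-1) = 1 - r by ring]
    change ‖θ n - x j‖ ≤ K * (g j + η j) at h3
    linarith


/-- Corollary 1.1 (i) of the paper: under Assumptions 1.1,
1.2, 1.3, almost surely on `Λ ∩ {ξ = 0, r̂ > r}` (with `θ̂ = lim θ_n`):
`‖∇f(θ_n)‖² = o(γ_n^{−p̂})`, `|f(θ_n) − f(θ̂)| = o(γ_n^{−p̂})` and
`‖θ_n − θ̂‖ = o(γ_n^{−q̂})`.  (`r̂ > r` is the condition
`μ̂ = 2 ∨ r < 1/(2 − μ̂)`.) -/
theorem stochastic_gradient_little_o_rates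
    {d : ℕ} (hd : 1 ≤ d)
    {Ω : Type} [MeasurableSpace Ω] (P : Measure Ω) [IsProbabilityMeasure P]
    (f : EuclideanSpace ℝ (Fin d) → ℝ)
    (hfd : Differentiable ℝ f)
    (hlip : LocallyLipschitz (fun x => gradient f x))
    (α : ℕ → ℝ) (hαpos : ∀ n, 0 < α n)
    (θ ξ : ℕ → Ω → EuclideanSpace ℝ (Fin d))
    (hrec : ∀ n ω, θ (n + 1) ω = θ n ω - α n • (gradient f (θ n ω) + ξ n ω))
    -- Assumption 1.1
    (hα0 : Tendsto α atTop (nhds 0))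
    (γ : ℕ → ℝ) (hγ : ∀ n, γ n = ∑ i ∈ Finset.range n, α i)
    (hαdiv : Tendsto γ atTop atTop)
    -- the interpolation index `a(n,t)`
    (a : ℕ → ℝ → ℕ)
    (ha : ∀ n t, 0 < t → a n t = sSup {k | n ≤ k ∧ γ k - γ n ≤ t})
    -- the event Λ
    (Λ : Set Ω) (hΛ : Λ = {ω | ∃ C, ∀ n, ‖θ n ω‖ ≤ C})
    -- Assumption 1.2
    (r : ℝ) (hr : 1 < r)
    (noise : ℕ → Ω → ℝ)
    (hnoise : ∀ n ω, noise n ω =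
      ⨆ k ∈ Set.Ico n (a n 1), ‖∑ i ∈ Finset.Icc n k, (α i * γ i ^ r) • ξ i ω‖)
    (hA12 : ∀ᵐ ω ∂P, ω ∈ Λ → IsBoundedUnder (· ≤ ·) atTop (fun n => noise n ω))
    (Xi : Ω → ℝ) (hXi : ∀ ω, Xi ω = Filter.limsup (fun n => noise n ω) atTop)
    -- Assumption 1.3 (Łojasiewicz-type gradient inequality)
    (hLoj : ∀ Q : Set (EuclideanSpace ℝ (Fin d)), IsCompact Q → ∀ b ∈ f '' Q,
      ∃ δ μ M : ℝ, δ ∈ Set.Ioc (0 : ℝ) 1 ∧ μ ∈ Set.Ioc (1 : ℝ) 2 ∧ 1 ≤ M ∧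
        ∀ x ∈ Q, |f x - b| ≤ δ → |f x - b| ≤ M * ‖gradient f x‖ ^ μ)
    -- the local Łojasiewicz data `δ_θ, μ_θ, M_θ` provided by Assumption 1.3
    (δl μl Ml : EuclideanSpace ℝ (Fin d) → ℝ)
    (hδl : ∀ x, δl x ∈ Set.Ioc (0 : ℝ) 1)
    (hμl : ∀ x, μl x ∈ Set.Ioc (1 : ℝ) 2)
    (hMl : ∀ x, 1 ≤ Ml x)
    (hLocal : ∀ x y, ‖y - x‖ ≤ δl x → |f y - f x| ≤ Ml x * ‖gradient f y‖ ^ μl x)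
    -- `min{r, r_θ}`, `p_θ = μ_θ min{r, r_θ}` and `q_θ = min{r, r_θ} − 1`
    (rmin p q : EuclideanSpace ℝ (Fin d) → ℝ)
    (hrmin : ∀ x, rmin x = if μl x < 2 then min r (1 / (2 - μl x)) else r)
    (hp : ∀ x, p x = μl x * rmin x)
    (hq : ∀ x, q x = rmin x - 1) :
    ∀ᵐ ω ∂P, ω ∈ Λ →
      ∃ θhat, Tendsto (fun n => θ n ω) atTop (nhds θhat) ∧
        ((Xi ω = 0 ∧ (μl θhat = 2 ∨ r < 1 / (2 - μl θhat))) →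
          ((fun n => ‖gradient f (θ n ω)‖ ^ 2) =o[atTop] fun n => γ n ^ (-(p θhat))) ∧
          ((fun n => |f (θ n ω) - f θhat|) =o[atTop] fun n => γ n ^ (-(p θhat))) ∧
          ((fun n => ‖θ n ω - θhat‖) =o[atTop] fun n => γ n ^ (-(q θhat)))) := by
  have hγ0 : γ 0 = 0 := by simp [hγ]
  have hγs : ∀ n, γ (n+1) = γ n + α n := fun n => by
    rw [hγ, hγ, Finset.sum_range_succ]
  have hmono : StrictMono γ := strictMono_nat_of_lt_succ (fun n => by linarith [hγs n, hαpos n])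
  -- the index set defining `a n 1` is bounded
  have hbdd : ∀ n, BddAbove {k | n ≤ k ∧ γ k - γ n ≤ 1} := by
    intro n
    obtain ⟨m, hm⟩ := (hαdiv.eventually_gt_atTop (γ n + 1)).exists
    refine ⟨m, fun k hk => ?_⟩
    by_contra h
    have := hmono (not_le.1 h)
    linarith [hk.2]
  have hsupbdd : ∀ n ω, BddAbove (Set.range (fun k => ⨆ (_ : k ∈ Set.Ico n (a n 1)),
      ‖∑ i ∈ Finset.Icc n k, (α i * γ i ^ r) • ξ i ω‖)) := by
    intro n ω
    refine Set.Finite.bddAbove ?_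
    refine Set.Finite.subset (((Set.finite_Ico n (a n 1)).image
      (fun k => ‖∑ i ∈ Finset.Icc n k, (α i * γ i ^ r) • ξ i ω‖)).insert 0) ?_
    rintro _ ⟨k, rfl⟩
    by_cases hk : k ∈ Set.Ico n (a n 1)
    · right
      refine ⟨k, hk, ?_⟩
      exact (ciSup_pos (f := fun _ => _) hk).symm
    · left
      have : IsEmpty (k ∈ Set.Ico n (a n 1)) := ⟨hk⟩
      simp only [Real.iSup_of_isEmpty]
  have hnoise0 : ∀ n ω, 0 ≤ noise n ω := by
    intro n ω
    rw [hnoise]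
    exact Real.iSup_nonneg (fun k => Real.iSup_nonneg (fun _ => norm_nonneg _))
  have hnoiseb : ∀ ω n k, n ≤ k → γ (k+1) - γ n ≤ 1 →
      ‖∑ i ∈ Finset.Icc n k, (α i * γ i ^ r) • ξ i ω‖ ≤ noise n ω := by
    intro ω n k hnk h1
    have hk : k ∈ Set.Ico n (a n 1) := by
      refine ⟨hnk, ?_⟩
      have : k + 1 ≤ a n 1 := by
        rw [ha n 1 one_pos]
        exact le_csSup (hbdd n) ⟨by omega, h1⟩
      omega
    rw [hnoise]
    refine le_trans (le_of_eq ?_) (le_ciSup (hsupbdd n ω) k)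
    exact (ciSup_pos (f := fun _ => _) hk).symm
  filter_upwards [hA12] with ω hω hωΛ
  have hB := hω hωΛ
  obtain ⟨b, hb⟩ := hB
  rw [eventually_map] at hb
  rw [hΛ] at hωΛ
  obtain ⟨R, hR⟩ := hωΛ
  obtain ⟨l, hl, hrate⟩ := path_theorem f hfd hlip α γ hαpos hα0 hγ0 hγs hαdiv
    (fun n => θ n ω) (fun n => ξ n ω) (fun n => hrec n ω) R hR r hr (fun n => noise n ω)
    (hnoiseb ω) (fun n => hnoise0 n ω) b hb hLoj
  refine ⟨l, hl, ?_⟩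
  rintro ⟨hXi0, hcond⟩
  have hν : Tendsto (fun n => noise n ω) atTop (nhds 0) := by
    rw [tendsto_order]
    refine ⟨fun c hc => Eventually.of_forall (fun n => hc.trans_le (hnoise0 n ω)), fun c hc => ?_⟩
    refine eventually_lt_of_limsup_lt ?_ (hω (by rw [hΛ]; exact ⟨R, hR⟩))
    rw [← hXi, hXi0]
    exact hc
  have hμ := hμl l
  have hs : r * (2 - μl l) < 1 := by
    rcases hcond with h | h
    · rw [h]; norm_num
    · rcases hμ.2.eq_or_lt with h2 | h2
      · rw [h2]; norm_num
      · rwa [lt_div_iff₀ (by linarith)] at h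
  have hrm : rmin l = r := by
    rw [hrmin]
    split_ifs with h
    · refine min_eq_left ?_
      rw [le_div_iff₀ (by linarith)]
      exact hs.le
    · rfl
  rw [hp, hq, hrm]
  exact hrate hν (δl l) (μl l) (Ml l) (hδl l).1 hμ.1 hμ.2 (hMl l) hs (hLocal l)
end

section
/- Under Assumptions 1.1, 1.2 and 1.3, almost surely on the event Λ ∩ (complement of {ξ = 0, r̂ > r}) (with θ̂ = lim_n θ_n): ‖∇f(θ_n)‖² = O(γ_n^{−p̂}), |f(θ_n) − f(θ̂)| = O(γ_n^{−p̂}), and ‖θ_n − θ̂‖ = O(γ_n^{−q̂}) as n → ∞, where p̂ = p_{θ̂}, q̂ = q_{θ̂}, r̂ = r_{θ̂}. -/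
open MeasureTheory Filter Asymptotics

lemma rpow_mvt (e s t : ℝ) (hs : 0 < s) (hst : s ≤ t) :
    ∃ u, s ≤ u ∧ u ≤ t ∧ t ^ e - s ^ e = e * u ^ (e - 1) * (t - s) := by
  rcases hst.eq_or_lt with h | h
  · subst h
    exact ⟨s, le_rfl, le_rfl, by simp⟩
  · obtain ⟨c, hc, h2⟩ := exists_hasDerivAt_eq_slope (fun x : ℝ => x ^ e)
      (fun x => e * x ^ (e - 1)) h
      (fun x hx => (Real.continuousAt_rpow_const x e (Or.inl (by
        have := hx.1; linarith [hx.1] |> ne_of_gt))).continuousWithinAt)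
      (fun x hx => Real.hasDerivAt_rpow_const (Or.inl (ne_of_gt (hs.trans hx.1))))
    refine ⟨c, hc.1.le, hc.2.le, ?_⟩
    have : t - s ≠ 0 := by linarith [sub_pos.2 h] |> ne_of_gt
    rw [h2]; field_simp

/-- convex tangent estimates -/
lemma rpow_neg_sub_le (p s t : ℝ) (hp : 0 ≤ p) (hs : 0 < s) (hst : s ≤ t) (ht1 : t ≤ s + 1) :
    s ^ (-p) - t ^ (-p) ≤ p * s ^ (-p - 1) := by
  obtain ⟨u, h1, h2, h3⟩ := rpow_mvt (-p) s t hs hst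
  have h4 : u ^ (-p - 1) ≤ s ^ (-p - 1) :=
    Real.rpow_le_rpow_of_nonpos hs h1 (by linarith)
  have h5 : 0 < u ^ (-p - 1) := Real.rpow_pos_of_pos (by linarith) _
  have h6 : u ^ (-p - 1) * (t - s) ≤ s ^ (-p - 1) := by nlinarith
  nlinarith [mul_le_mul_of_nonneg_left h6 hp]

lemma rpow_sub_le (m s t : ℝ) (hm : 1 < m) (hs : 0 < s) (hst : s ≤ t) (ht1 : t ≤ s + 1) :
    t ^ m - s ^ m ≤ m * t ^ (m - 1) := by
  obtain ⟨u, h1, h2, h3⟩ := rpow_mvt m s t hs hst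
  have h4 : u ^ (m - 1) ≤ t ^ (m - 1) :=
    Real.rpow_le_rpow (by linarith) h2 (by linarith)
  have h5 : 0 < u ^ (m - 1) := Real.rpow_pos_of_pos (by linarith) _
  have h6 : u ^ (m - 1) * (t - s) ≤ t ^ (m - 1) := by nlinarith
  nlinarith [mul_le_mul_of_nonneg_left h6 (by linarith : 0 ≤ m)]

lemma rpow_half (m s t : ℝ) (hm : 0 ≤ m) (hs : 1 ≤ s) (hst : s ≤ t) (ht1 : t ≤ s + 1) :
    s ^ (-m) ≤ 2 ^ m * t ^ (-m) := by
  have h0 : (0:ℝ) < t := by linarith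
  have : (2 * s) ^ (-m) ≤ t ^ (-m) :=
    Real.rpow_le_rpow_of_nonpos h0 (by linarith) (by linarith)
  rw [Real.mul_rpow (by norm_num) (by linarith)] at this
  calc s ^ (-m) = 2 ^ m * (2 ^ (-m) * s ^ (-m)) := by
        rw [← mul_assoc, ← Real.rpow_add (by norm_num)]; simp
    _ ≤ _ := by gcongr

lemma rpow_tele (m T s t : ℝ) (hm : 1 < m) (hs : 1 ≤ s) (hT : 0 < T) (hst : s + T / 2 ≤ t)
    (ht1 : t ≤ s + 1) :
    s ^ (-m) ≤ (2 ^ m / ((m - 1) * (T / 2))) * (s ^ (1 - m) - t ^ (1 - m)) := by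
  have hst' : s ≤ t := by linarith
  obtain ⟨u, h1, h2, h3⟩ := rpow_mvt (1 - m) s t (by linarith) hst'
  have e : 1 - m - 1 = -m := by ring
  rw [e] at h3
  have h4 : t ^ (-m) ≤ u ^ (-m) :=
    Real.rpow_le_rpow_of_nonpos (by linarith) h2 (by linarith)
  have h5 : 0 < t ^ (-m) := Real.rpow_pos_of_pos (by linarith) _
  have h6 : t ^ (-m) * (T / 2) ≤ u ^ (-m) * (t - s) := by
    apply mul_le_mul h4 (by linarith) (by linarith) (by linarith)
  have h7 := rpow_half m s t (by linarith) hs hst' ht1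
  have h8 : (m - 1) * (T / 2) * t ^ (-m) ≤ s ^ (1 - m) - t ^ (1 - m) := by
    nlinarith [mul_le_mul_of_nonneg_left h6 (by linarith : 0 ≤ m - 1)]
  have h9 : 0 < (m - 1) * (T / 2) := mul_pos (by linarith) (by linarith)
  refine h7.trans ?_
  rw [div_mul_eq_mul_div, le_div_iff₀ h9]
  have : (0:ℝ) < 2 ^ m := by positivity
  nlinarith

lemma choose_K (μ m c C M : ℝ) (hμ1 : 1 < μ) (hμ2 : μ ≤ 2) (hm : 1 < m) (hmμ : (2 - μ) * m ≤ 1)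
    (hc : 0 < c) (hC : 0 ≤ C) (hM : 1 ≤ M) :
    ∃ K0 S0 : ℝ, 1 ≤ S0 ∧ ∀ K s, K0 ≤ K → S0 ≤ s →
      μ * m * K * s ^ (-(μ * m) - 1) + C * s ^ (-(2 * m)) ≤
        c * (K / (2 * M)) ^ (2 / μ) * s ^ (-(2 * m)) := by
  rcases hμ2.lt_or_eq with h | h
  · -- superlinear growth
    have he : 0 < 2 / μ - 1 := by
      rw [sub_pos, lt_div_iff₀ (by linarith)]; linarith
    have ht : Tendsto (fun K : ℝ => (K / (2 * M)) ^ (2 / μ - 1)) atTop atTop :=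
      (tendsto_rpow_atTop he).comp (tendsto_id.atTop_div_const (by linarith))
    obtain ⟨K1, hK1⟩ := (eventually_atTop.1 (ht.eventually_ge_atTop (2 * M * (μ * m + C) / c)))
    refine ⟨max K1 1, 1, le_rfl, fun K s hK hs => ?_⟩
    have hKp : 1 ≤ K := (le_max_right _ _).trans hK
    have h1 := hK1 K ((le_max_left _ _).trans hK)
    have hKM : 0 < K / (2 * M) := by positivity
    have h2 : (K / (2 * M)) ^ (2 / μ) = (K / (2 * M)) ^ (2 / μ - 1) * (K / (2 * M)) := by
      rw [← Real.rpow_add_one hKM.ne']; congr 1; ring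
    have h3 : s ^ (-(μ * m) - 1) ≤ s ^ (-(2 * m)) :=
      Real.rpow_le_rpow_of_exponent_le hs (by nlinarith)
    have h4 : 0 < s ^ (-(2 * m)) := Real.rpow_pos_of_pos (by linarith) _
    have h5 : (μ * m + C) * K ≤ c * (K / (2 * M)) ^ (2 / μ) := by
      rw [h2]
      calc (μ * m + C) * K = c * ((2 * M * (μ * m + C) / c) * (K / (2 * M))) := by
            field_simp
        _ ≤ _ := by gcongr
    have hμm : 0 < μ * m := by positivity
    calc _ ≤ μ * m * K * s ^ (-(2 * m)) + C * K * s ^ (-(2 * m)) := by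
          gcongr
          nlinarith
      _ = (μ * m + C) * K * s ^ (-(2 * m)) := by ring
      _ ≤ _ := by gcongr
  · subst h
    refine ⟨max (4 * M * C / c) 1, max 1 (8 * M * m / c), le_max_left _ _, fun K s hK hs => ?_⟩
    have hKp : 1 ≤ K := (le_max_right _ _).trans hK
    have hK2 := (le_max_left _ _).trans hK
    have hs1 := (le_max_left _ _).trans hs
    have hs2 := (le_max_right _ _).trans hs
    have hs0 : 0 < s := by linarith
    have h4 : 0 < s ^ (-(2 * m)) := Real.rpow_pos_of_pos (by linarith) _
    rw [Real.rpow_sub_one hs0.ne']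
    norm_num
    have : 2 * m * K / s + C ≤ c * (K / (2 * M)) := by
      rw [div_le_iff₀ hc] at hK2 hs2
      have a1 : 2 * m * K / s ≤ c * K / (4 * M) := by
        rw [div_le_div_iff₀ hs0 (by linarith)]
        nlinarith
      have a2 : C ≤ c * K / (4 * M) := by
        rw [le_div_iff₀ (by linarith)]; nlinarith
      have : c * (K / (2 * M)) = c * K / (4 * M) + c * K / (4 * M) := by field_simp; norm_num
      linarith
    calc _ = (2 * m * K / s + C) * s ^ (-(2 * m)) := by ring
      _ ≤ _ := by gcongr

/-- `c·G² ≥ c (A/M)^{2/μ}` from the Łojasiewicz inequality. -/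
lemma loj_sq (μ M G A : ℝ) (hμ1 : 1 < μ) (hM : 1 ≤ M) (hG : 0 ≤ G) (hA : 0 ≤ A)
    (h : A ≤ M * G ^ μ) : (A / M) ^ (2 / μ) ≤ G ^ 2 := by
  have h1 : A / M ≤ G ^ μ := by rw [div_le_iff₀ (by linarith)]; linarith
  calc (A / M) ^ (2 / μ) ≤ (G ^ μ) ^ (2 / μ) := by
        apply Real.rpow_le_rpow (by positivity) h1 (by positivity)
    _ = G ^ 2 := by
        rw [← Real.rpow_mul hG, mul_div_cancel₀ _ (by linarith)]; norm_num

lemma scale_pow (μ m K s : ℝ) (hμ1 : 1 < μ) (hK : 0 ≤ K) (hs : 0 < s) :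
    (K * s ^ (-(μ * m))) ^ (2 / μ) = K ^ (2 / μ) * s ^ (-(2 * m)) := by
  rw [Real.mul_rpow hK (Real.rpow_nonneg hs.le _), ← Real.rpow_mul hs.le]
  congr 2; field_simp

lemma seq_upper (μ m r T c C M : ℝ) (x G s : ℕ → ℝ) (hμ1 : 1 < μ) (hμ2 : μ ≤ 2) (hm : 1 < m)
    (hmr : m ≤ r) (hmμ : (2 - μ) * m ≤ 1) (hT : 0 < T) (hT1 : T ≤ 1)
    (hc : 0 < c) (hC : 0 ≤ C) (hM : 1 ≤ M) (hG : ∀ j, 0 ≤ G j)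
    (hs1 : ∀ j, 1 ≤ s j) (hsl : ∀ j, s j + T / 2 ≤ s (j + 1)) (hsu : ∀ j, s (j + 1) ≤ s j + T)
    (hst : Tendsto s atTop atTop)
    (hdesc : ∀ j, x (j + 1) ≤ x j - c * G j ^ 2 + C * s j ^ (-(2 * r)))
    (hloj : ∀ᶠ j in atTop, |x j| ≤ M * G j ^ μ) :
    ∃ K : ℝ, ∀ᶠ j in atTop, x j ≤ K * s j ^ (-(μ * m)) := by
  obtain ⟨K0, S0, hS0, hK0⟩ := choose_K μ m c C M hμ1 hμ2 hm hmμ hc hC hM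
  obtain ⟨J, hJ⟩ := eventually_atTop.1 ((hst.eventually_ge_atTop (max S0 (4 * (μ * m)))).and hloj)
  have hsJ : 0 < s J ^ (-(μ * m)) := Real.rpow_pos_of_pos (by linarith [hs1 J]) _
  set K := max (max K0 1) (max (4 * C) (x J / s J ^ (-(μ * m)))) with hK
  have k1 : K0 ≤ K := (le_max_left _ _).trans (le_max_left _ _)
  have k2 : 1 ≤ K := (le_max_right _ _).trans (le_max_left _ _)
  have k3 : 4 * C ≤ K := (le_max_left _ _).trans (le_max_right _ _)
  have k4 : x J / s J ^ (-(μ * m)) ≤ K := (le_max_right _ _).trans (le_max_right _ _)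
  refine ⟨K, eventually_atTop.2 ⟨J, fun j hj => ?_⟩⟩
  induction j, hj using Nat.le_induction with
  | base => rwa [div_le_iff₀ hsJ] at k4
  | succ j hj ih =>
    obtain ⟨⟨hjs, hjl⟩⟩ := And.intro (hJ j hj) trivial
    have hjs1 := (le_max_left _ _).trans hjs
    have hjs2 := (le_max_right _ _).trans hjs
    have sp : 0 < s j := by linarith [hs1 j]
    have hμm : 0 < μ * m := by positivity
    have t1 := rpow_neg_sub_le (μ * m) (s j) (s (j + 1)) hμm.le sp (by linarith [hsl j])
      (by linarith [hsu j])
    have hy : 0 < s j ^ (-(μ * m)) := Real.rpow_pos_of_pos sp _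
    have hd := hdesc j
    have hr2 : s j ^ (-(2 * r)) ≤ s j ^ (-(2 * m)) :=
      Real.rpow_le_rpow_of_exponent_le (hs1 j) (by linarith)
    have hr3 : s j ^ (-(2 * m)) ≤ s j ^ (-(μ * m)) :=
      Real.rpow_le_rpow_of_exponent_le (hs1 j) (by nlinarith)
    by_cases hx : x j ≤ K * s j ^ (-(μ * m)) / 2
    · have t2 : s j ^ (-(μ * m)) - s (j + 1) ^ (-(μ * m)) ≤ s j ^ (-(μ * m)) / 4 := by
        refine t1.trans ?_
        rw [Real.rpow_sub_one sp.ne', mul_div_assoc', div_le_div_iff₀ sp (by norm_num)]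
        nlinarith
      have t3 : C * s j ^ (-(2 * r)) ≤ K * s j ^ (-(μ * m)) / 4 := by
        have : C * s j ^ (-(2 * r)) ≤ C * s j ^ (-(μ * m)) := by gcongr; linarith
        nlinarith
      have : 0 ≤ c * G j ^ 2 := by positivity
      nlinarith [mul_le_mul_of_nonneg_left t2 (by linarith : 0 ≤ K)]
    · push Not at hx
      have hx0 : 0 ≤ x j := le_trans (by positivity) hx.le
      rw [abs_of_nonneg hx0] at hjl
      have g1 := loj_sq μ M (G j) (K * s j ^ (-(μ * m)) / 2) hμ1 hM (hG j) (by positivity)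
        (hx.le.trans hjl)
      have g2 : K * s j ^ (-(μ * m)) / 2 / M = (K / (2 * M)) * s j ^ (-(μ * m)) := by
        field_simp
      rw [g2, scale_pow μ m _ _ hμ1 (by positivity) sp] at g1
      have g3 := hK0 K (s j) k1 hjs1
      have g4 : C * s j ^ (-(2 * r)) ≤ C * s j ^ (-(2 * m)) := by gcongr
      have g5 := mul_le_mul_of_nonneg_left g1 hc.le
      have g6 := mul_le_mul_of_nonneg_left t1 (by linarith : 0 ≤ K)
      nlinarith

lemma seq_lower (μ m r T c C M : ℝ) (x G s : ℕ → ℝ) (hμ1 : 1 < μ) (hμ2 : μ ≤ 2) (hm : 1 < m)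
    (hmr : m ≤ r) (hT : 0 < T)
    (hc : 0 < c) (hC : 0 ≤ C) (hM : 1 ≤ M) (hG : ∀ j, 0 ≤ G j)
    (hs1 : ∀ j, 1 ≤ s j) (hsl : ∀ j, s j + T / 2 ≤ s (j + 1))
    (hx : Tendsto x atTop (nhds 0))
    (hdesc : ∀ j, x (j + 1) ≤ x j - c * G j ^ 2 + C * s j ^ (-(2 * r)))
    (hloj : ∀ᶠ j in atTop, |x j| ≤ M * G j ^ μ) :
    ∃ K : ℝ, ∀ᶠ j in atTop, -x j ≤ K * s j ^ (-(μ * m)) := by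
  obtain ⟨J, hJ⟩ := eventually_atTop.1 hloj
  set A := max 1 (C / c) with hA
  have a1 : 1 ≤ A := le_max_left _ _
  have a2 : C / c ≤ A := le_max_right _ _
  refine ⟨M * A, eventually_atTop.2 ⟨J, fun j hj => ?_⟩⟩
  by_contra hcon
  push Not at hcon
  have key : ∀ i, j ≤ i → M * A * s i ^ (-(μ * m)) < - x i ∧ x i ≤ x j := by
    intro i hi
    induction i, hi using Nat.le_induction with
    | base => exact ⟨hcon, le_rfl⟩
    | succ i hi ih =>
      obtain ⟨i1, i2⟩ := ih
      have sp : 0 < s i := by linarith [hs1 i]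
      have hy : 0 < s i ^ (-(μ * m)) := Real.rpow_pos_of_pos sp _
      have hl := hJ i (hj.trans hi)
      have hneg : -x i ≤ |x i| := neg_le_abs _
      have g1 := loj_sq μ M (G i) (M * A * s i ^ (-(μ * m))) hμ1 hM (hG i) (by positivity)
        (by linarith)
      have g2 : M * A * s i ^ (-(μ * m)) / M = A * s i ^ (-(μ * m)) := by field_simp
      rw [g2, scale_pow μ m _ _ hμ1 (by positivity) sp] at g1
      have g3 : A ≤ A ^ (2 / μ) := by
        conv_lhs => rw [← Real.rpow_one A]
        apply Real.rpow_le_rpow_of_exponent_le a1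
        rw [le_div_iff₀ (by linarith)]; linarith
      have hr2 : s i ^ (-(2 * r)) ≤ s i ^ (-(2 * m)) :=
        Real.rpow_le_rpow_of_exponent_le (hs1 i) (by linarith)
      have h0 : 0 < s i ^ (-(2 * m)) := Real.rpow_pos_of_pos sp _
      have g4 : C ≤ c * A ^ (2 / μ) := by
        rw [div_le_iff₀ hc] at a2; nlinarith
      have g5 : C * s i ^ (-(2 * r)) ≤ c * G i ^ 2 := by
        calc _ ≤ C * s i ^ (-(2 * m)) := by gcongr
          _ ≤ c * A ^ (2 / μ) * s i ^ (-(2 * m)) := by gcongr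
          _ = c * (A ^ (2 / μ) * s i ^ (-(2 * m))) := by ring
          _ ≤ _ := by gcongr
      have g6 : x (i + 1) ≤ x i := by linarith [hdesc i]
      have g7 : s (i + 1) ^ (-(μ * m)) ≤ s i ^ (-(μ * m)) :=
        Real.rpow_le_rpow_of_nonpos sp (by linarith [hsl i]) (by nlinarith)
      refine ⟨?_, g6.trans i2⟩
      have : M * A * s (i + 1) ^ (-(μ * m)) ≤ M * A * s i ^ (-(μ * m)) := by gcongr
      linarith
  have h0 : 0 < s j ^ (-(μ * m)) := Real.rpow_pos_of_pos (by linarith [hs1 j]) _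
  have : (0:ℝ) ≤ x j := le_of_tendsto hx (eventually_atTop.2 ⟨j, fun i hi => (key i hi).2⟩)
  have : 0 < M * A * s j ^ (-(μ * m)) := by positivity
  linarith

lemma seq_rates (μ m r T c C M : ℝ) (x G s : ℕ → ℝ) (hμ1 : 1 < μ) (hμ2 : μ ≤ 2) (hm : 1 < m)
    (hmr : m ≤ r) (hmμ : (2 - μ) * m ≤ 1) (hT : 0 < T) (hT1 : T ≤ 1)
    (hc : 0 < c) (hC : 0 ≤ C) (hM : 1 ≤ M) (hG : ∀ j, 0 ≤ G j)
    (hs1 : ∀ j, 1 ≤ s j) (hsl : ∀ j, s j + T / 2 ≤ s (j + 1)) (hsu : ∀ j, s (j + 1) ≤ s j + T)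
    (hst : Tendsto s atTop atTop)
    (hx : Tendsto x atTop (nhds 0))
    (hdesc : ∀ j, x (j + 1) ≤ x j - c * G j ^ 2 + C * s j ^ (-(2 * r)))
    (hloj : ∀ᶠ j in atTop, |x j| ≤ M * G j ^ μ) :
    ∃ (K : ℝ) (J : ℕ) (H : ℕ → ℝ), 0 ≤ K ∧ ∀ j ≥ J,
      |x j| ≤ K * s j ^ (-(μ * m)) ∧ G j ^ 2 ≤ K * s j ^ (-(μ * m)) ∧
      |H j| ≤ K * s j ^ (-(m - 1)) ∧ G j + s j ^ (-r) ≤ H j - H (j + 1) := by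
  obtain ⟨K1, h1⟩ := seq_upper μ m r T c C M x G s hμ1 hμ2 hm hmr hmμ hT hT1 hc hC hM hG hs1 hsl
    hsu hst hdesc hloj
  obtain ⟨K2, h2⟩ := seq_lower μ m r T c C M x G s hμ1 hμ2 hm hmr hT hc hC hM hG hs1 hsl
    hx hdesc hloj
  obtain ⟨J, hJ⟩ := eventually_atTop.1 (h1.and h2)
  set K := max 0 (max K1 K2) with hK
  have hK0 : 0 ≤ K := le_max_left _ _
  have k1 : K1 ≤ K := (le_max_left _ _).trans (le_max_right _ _)
  have k2 : K2 ≤ K := (le_max_right _ _).trans (le_max_right _ _)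
  have sp : ∀ j, 0 < s j := fun j => by linarith [hs1 j]
  have hxb : ∀ j ≥ J, |x j| ≤ K * s j ^ (-(μ * m)) := by
    intro j hj
    have hy : 0 < s j ^ (-(μ * m)) := Real.rpow_pos_of_pos (sp j) _
    rw [abs_le']
    exact ⟨(hJ j hj).1.trans (by gcongr), (hJ j hj).2.trans (by gcongr)⟩
  have hG2 : ∀ j ≥ J, G j ^ 2 ≤ ((2 * K + C) / c) * s j ^ (-(μ * m)) := by
    intro j hj
    have hy : 0 < s j ^ (-(μ * m)) := Real.rpow_pos_of_pos (sp j) _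
    have b1 := (abs_le.1 (hxb j hj)).2
    have b2 := (abs_le.1 (hxb (j + 1) (by omega))).1
    have g7 : s (j + 1) ^ (-(μ * m)) ≤ s j ^ (-(μ * m)) :=
      Real.rpow_le_rpow_of_nonpos (sp j) (by linarith [hsl j]) (by nlinarith)
    have hr2 : s j ^ (-(2 * r)) ≤ s j ^ (-(μ * m)) :=
      Real.rpow_le_rpow_of_exponent_le (hs1 j) (by nlinarith)
    have := hdesc j
    rw [div_mul_eq_mul_div, le_div_iff₀ hc]
    nlinarith [mul_le_mul_of_nonneg_left g7 hK0, mul_le_mul_of_nonneg_left hr2 hC]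
  set B := 2 ^ m / ((m - 1) * (T / 2)) with hB
  have hB0 : 0 ≤ B := by
    have : 0 < (m - 1) * (T / 2) := mul_pos (by linarith) (by linarith)
    positivity
  set D := (C + m * K) / (2 * c) + 1 / 2 + 1 with hD
  have hD0 : 0 ≤ D := by positivity
  let H : ℕ → ℝ := fun j => 1 / (2 * c) * (s j ^ m * x j) + D * B * s j ^ (1 - m)
  have hK3 : 0 ≤ (2 * K + C) / c := by positivity
  have hK4 : 0 ≤ 1 / (2 * c) * K + D * B := by positivity
  refine ⟨K + (2 * K + C) / c + (1 / (2 * c) * K + D * B), J, H, by positivity,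
    fun j hj => ⟨?_, ?_, ?_, ?_⟩⟩
  · have hy : 0 < s j ^ (-(μ * m)) := Real.rpow_pos_of_pos (sp j) _
    exact (hxb j hj).trans (by gcongr; linarith)
  · have hy : 0 < s j ^ (-(μ * m)) := Real.rpow_pos_of_pos (sp j) _
    exact (hG2 j hj).trans (by gcongr; linarith)
  · have hy : 0 < s j ^ (-(m - 1)) := Real.rpow_pos_of_pos (sp j) _
    have hsm : 0 < s j ^ m := Real.rpow_pos_of_pos (sp j) _
    have e1 : s j ^ m * s j ^ (-(μ * m)) ≤ s j ^ (-(m - 1)) := by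
      rw [← Real.rpow_add (sp j)]
      exact Real.rpow_le_rpow_of_exponent_le (hs1 j) (by linarith)
    have e2 : |s j ^ m * x j| ≤ K * s j ^ (-(m - 1)) := by
      rw [abs_mul, abs_of_pos hsm]
      calc _ ≤ s j ^ m * (K * s j ^ (-(μ * m))) := by gcongr; exact hxb j hj
        _ = K * (s j ^ m * s j ^ (-(μ * m))) := by ring
        _ ≤ _ := by gcongr
    have e3 : (1 - m) = -(m - 1) := by ring
    calc |H j| ≤ |1 / (2 * c) * (s j ^ m * x j)| + |D * B * s j ^ (1 - m)| := abs_add_le _ _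
      _ = 1 / (2 * c) * |s j ^ m * x j| + D * B * s j ^ (-(m - 1)) := by
          rw [e3, abs_mul, abs_of_pos (by positivity : 0 < 1 / (2 * c)),
            abs_of_nonneg (by positivity : 0 ≤ D * B * s j ^ (-(m - 1)))]
      _ ≤ 1 / (2 * c) * (K * s j ^ (-(m - 1))) + D * B * s j ^ (-(m - 1)) := by gcongr
      _ = (1 / (2 * c) * K + D * B) * s j ^ (-(m - 1)) := by ring
      _ ≤ _ := mul_le_mul_of_nonneg_right (by linarith) hy.le
  · have hsm : 0 < s j ^ m := Real.rpow_pos_of_pos (sp j) _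
    have hsm' : 0 < s j ^ (-m) := Real.rpow_pos_of_pos (sp j) _
    have hmm : s j ^ m * s j ^ (-m) = 1 := by rw [← Real.rpow_add (sp j)]; simp
    -- AM-GM
    have am : G j ≤ 1 / 2 * (s j ^ m * G j ^ 2) + 1 / 2 * s j ^ (-m) := by
      have : 0 ≤ s j ^ (-m) * (s j ^ m * G j - 1) ^ 2 := by positivity
      have e : s j ^ (-m) * (s j ^ m * G j - 1) ^ 2
          = (s j ^ m * s j ^ (-m)) * (s j ^ m * G j ^ 2) - 2 * (s j ^ m * s j ^ (-m)) * G j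
            + s j ^ (-m) := by ring
      rw [e, hmm] at this
      linarith
    have hr' : s j ^ (-r) ≤ s j ^ (-m) :=
      Real.rpow_le_rpow_of_exponent_le (hs1 j) (by linarith)
    have d1 := mul_le_mul_of_nonneg_left (hdesc j) hsm.le
    have d2 : s j ^ m * s j ^ (-(2 * r)) ≤ s j ^ (-m) := by
      rw [← Real.rpow_add (sp j)]
      exact Real.rpow_le_rpow_of_exponent_le (hs1 j) (by linarith)
    have d3 : (s (j + 1) ^ m - s j ^ m) * x (j + 1) ≤ m * K * s j ^ (-m) := by
      have f1 := rpow_sub_le m (s j) (s (j + 1)) hm (sp j) (by linarith [hsl j])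
        (by linarith [hsu j])
      have f0 : 0 ≤ s (j + 1) ^ m - s j ^ m :=
        sub_nonneg.2 (Real.rpow_le_rpow (sp j).le (by linarith [hsl j]) (by linarith))
      have f2 := (abs_le.1 (hxb (j + 1) (by omega))).2
      have f3 : 0 ≤ K * s (j + 1) ^ (-(μ * m)) :=
        mul_nonneg hK0 (Real.rpow_nonneg (sp _).le _)
      calc _ ≤ (s (j + 1) ^ m - s j ^ m) * (K * s (j + 1) ^ (-(μ * m))) := by gcongr
        _ ≤ m * s (j + 1) ^ (m - 1) * (K * s (j + 1) ^ (-(μ * m))) := by gcongr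
        _ = m * K * (s (j + 1) ^ (m - 1) * s (j + 1) ^ (-(μ * m))) := by ring
        _ ≤ m * K * s (j + 1) ^ (-m) := by
            rw [← Real.rpow_add (sp _)]
            gcongr
            · exact hs1 _
            · linarith
        _ ≤ m * K * s j ^ (-m) := by
            have := Real.rpow_le_rpow_of_nonpos (sp j) (by linarith [hsl j] : s j ≤ s (j + 1))
              (by linarith : -m ≤ 0)
            gcongr
    have d4 := rpow_tele m T (s j) (s (j + 1)) hm (hs1 j) hT (hsl j) (by linarith [hsu j])
    rw [← hB] at d4
    have d5 : c * (s j ^ m * G j ^ 2) ≤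
        s j ^ m * x j - s (j + 1) ^ m * x (j + 1) + (C + m * K) * s j ^ (-m) := by
      nlinarith [mul_le_mul_of_nonneg_left d2 hC]
    have d6 : 1 / 2 * (s j ^ m * G j ^ 2) ≤ 1 / (2 * c) * (s j ^ m * x j) -
        1 / (2 * c) * (s (j + 1) ^ m * x (j + 1)) + (C + m * K) / (2 * c) * s j ^ (-m) := by
      have := mul_le_mul_of_nonneg_left d5 (by positivity : 0 ≤ 1 / (2 * c))
      have e : 1 / (2 * c) * (c * (s j ^ m * G j ^ 2)) = 1 / 2 * (s j ^ m * G j ^ 2) := by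
        field_simp
      rw [e] at this
      refine this.trans (le_of_eq ?_)
      ring
    have d7 := mul_le_mul_of_nonneg_left d4 hD0
    have d8 : D * s j ^ (-m) = (C + m * K) / (2 * c) * s j ^ (-m) + 1 / 2 * s j ^ (-m)
      + s j ^ (-m) := by rw [hD]; ring
    simp only [H]
    nlinarith

lemma abel_bound_s3 {E : Type*} [NormedAddCommGroup E] [NormedSpace ℝ E] (b : ℕ → ℝ) (y : ℕ → E)
    (n : ℕ) (C : ℝ) (hb0 : ∀ i ≥ n, 0 ≤ b i) (hb : ∀ i ≥ n, b (i + 1) ≤ b i)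
    (k : ℕ) (hk : n ≤ k) (hA : ∀ i, n ≤ i → i ≤ k → ‖∑ i ∈ Finset.Ico n i, y i‖ ≤ C) :
    ‖∑ i ∈ Finset.Ico n k, b i • y i‖ ≤ C * b n := by
  have key : ∀ l, n ≤ l → l ≤ k →
      ‖∑ i ∈ Finset.Ico n l, b i • y i - b l • ∑ i ∈ Finset.Ico n l, y i‖ ≤ C * (b n - b l) := by
    intro l hl
    induction l, hl using Nat.le_induction with
    | base => intro _; simp
    | succ l hl ih =>
      intro hlk
      have h1 := ih (by omega)
      have h2 := hA (l + 1) (by omega) hlk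
      have e : ∑ i ∈ Finset.Ico n (l + 1), b i • y i - b (l + 1) • ∑ i ∈ Finset.Ico n (l + 1), y i
          = (∑ i ∈ Finset.Ico n l, b i • y i - b l • ∑ i ∈ Finset.Ico n l, y i)
            + (b l - b (l + 1)) • ∑ i ∈ Finset.Ico n (l + 1), y i := by
        rw [Finset.sum_Ico_succ_top hl, Finset.sum_Ico_succ_top hl]
        module
      rw [e]
      have h3 := hb l hl
      calc _ ≤ _ := norm_add_le _ _
        _ ≤ C * (b n - b l) + (b l - b (l + 1)) * C := by
            rw [norm_smul, Real.norm_of_nonneg (by linarith : 0 ≤ b l - b (l + 1))]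
            gcongr
        _ = _ := by ring
  have h1 := key k hk le_rfl
  have h2 := hA k hk le_rfl
  have h3 := hb0 k hk
  calc _ = ‖(∑ i ∈ Finset.Ico n k, b i • y i - b k • ∑ i ∈ Finset.Ico n k, y i)
          + b k • ∑ i ∈ Finset.Ico n k, y i‖ := by rw [sub_add_cancel]
    _ ≤ _ := norm_add_le _ _
    _ ≤ C * (b n - b k) + b k * C := by
        rw [norm_smul, Real.norm_of_nonneg h3]
        gcongr
    _ = _ := by ring

lemma noise_bound {E : Type*} [NormedAddCommGroup E] [NormedSpace ℝ E]
    (α γ : ℕ → ℝ) (hαpos : ∀ n, 0 < α n) (hγ : ∀ n, γ n = ∑ i ∈ Finset.range n, α i)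
    (hαdiv : Tendsto γ atTop atTop) (a : ℕ → ℝ → ℕ)
    (ha : ∀ n t, 0 < t → a n t = sSup {k | n ≤ k ∧ γ k - γ n ≤ t})
    (r : ℝ) (hr : 1 < r) (ξ : ℕ → E) (noise : ℕ → ℝ)
    (hnoise : ∀ n, noise n =
      ⨆ k ∈ Set.Ico n (a n 1), ‖∑ i ∈ Finset.Icc n k, (α i * γ i ^ r) • ξ i‖)
    (hb : IsBoundedUnder (· ≤ ·) atTop noise) :
    ∃ (C : ℝ) (N : ℕ), 0 ≤ C ∧ 1 ≤ N ∧ ∀ n ≥ N, ∀ k ≥ n, γ k - γ n ≤ 1 →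
      ‖∑ i ∈ Finset.Ico n k, α i • ξ i‖ ≤ C * γ n ^ (-r) := by
  obtain ⟨C, hC⟩ := hb
  obtain ⟨N, hN⟩ := eventually_atTop.1 (eventually_map.1 hC)
  have hγs : ∀ n, γ (n + 1) = γ n + α n := fun n => by
    rw [hγ, hγ, Finset.sum_range_succ]
  have hmono : StrictMono γ := strictMono_nat_of_lt_succ fun n => by
    rw [hγs]; linarith [hαpos n]
  have hpos : ∀ n ≥ 1, 0 < γ n := fun n hn => by
    have : γ 0 = 0 := by rw [hγ]; simp
    have := hmono (by omega : 0 < n)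
    linarith
  refine ⟨max C 0, max N 1, le_max_right _ _, le_max_right _ _, fun n hn k hk hγk => ?_⟩
  have hn1 : 1 ≤ n := (le_max_right _ _).trans hn
  have hnN : N ≤ n := (le_max_left _ _).trans hn
  have main : ∀ i, n ≤ i → i ≤ k →
      ‖∑ i ∈ Finset.Ico n i, (α i * γ i ^ r) • ξ i‖ ≤ max C 0 := by
    intro i hi hik
    rcases hi.eq_or_lt with h | h
    · subst h; simp
    obtain ⟨l, rfl⟩ : ∃ l, i = l + 1 := ⟨i - 1, by omega⟩
    have e : Finset.Ico n (l + 1) = Finset.Icc n l := by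
      ext z; simp only [Finset.mem_Ico, Finset.mem_Icc]; omega
    rw [e]
    refine le_trans ?_ ((hN n hnN).trans (le_max_left _ _))
    rw [hnoise n]
    have hbdd : BddAbove {k | n ≤ k ∧ γ k - γ n ≤ 1} := by
      obtain ⟨Z, hZ⟩ := eventually_atTop.1 (hαdiv.eventually_gt_atTop (γ n + 1))
      refine ⟨Z, fun z hz => ?_⟩
      by_contra hcon
      have := hZ z (by omega)
      have := hz.2
      linarith
    have hl : l ∈ Set.Ico n (a n 1) := by
      refine ⟨by omega, ?_⟩
      rw [ha n 1 one_pos]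
      refine lt_of_lt_of_le (Nat.lt_succ_self l) (le_csSup hbdd ⟨hi, ?_⟩)
      have := hmono.monotone hik
      simp only [Nat.succ_eq_add_one]
      linarith
    have hbd2 : BddAbove (Set.range fun k => ⨆ (_ : k ∈ Set.Ico n (a n 1)),
        ‖∑ i ∈ Finset.Icc n k, (α i * γ i ^ r) • ξ i‖) := by
      refine ⟨∑ k ∈ Finset.Ico n (a n 1), ‖∑ i ∈ Finset.Icc n k, (α i * γ i ^ r) • ξ i‖, ?_⟩
      rintro _ ⟨z, rfl⟩
      by_cases hz : z ∈ Set.Ico n (a n 1)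
      · simp only [hz, ciSup_unique]
        exact Finset.single_le_sum
          (f := fun k => ‖∑ i ∈ Finset.Icc n k, (α i * γ i ^ r) • ξ i‖)
          (fun _ _ => norm_nonneg _) (Finset.mem_Ico.2 hz)
      · simp only [hz, Real.iSup_of_isEmpty]
        exact Finset.sum_nonneg fun _ _ => norm_nonneg _
    refine le_trans (le_of_eq ?_) (le_ciSup hbd2 l)
    simp only [hl, ciSup_unique]
  have := abel_bound_s3 (fun i => γ i ^ (-r)) (fun i => (α i * γ i ^ r) • ξ i) n (max C 0)
    (fun i hi => Real.rpow_nonneg (hpos i (by omega)).le _)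
    (fun i hi => Real.rpow_le_rpow_of_nonpos (hpos i (by omega))
      (hmono.monotone (by omega)) (by linarith)) k hk main
  refine le_trans (le_of_eq ?_) this
  congr 1
  refine Finset.sum_congr rfl fun i hi => ?_
  have hi' := hpos i (by have := (Finset.mem_Ico.1 hi).1; omega)
  rw [smul_smul]
  congr 1
  have : γ i ^ (-r) * γ i ^ r = 1 := by rw [← Real.rpow_add hi']; simp
  calc α i = α i * (γ i ^ (-r) * γ i ^ r) := by rw [this, mul_one]
    _ = _ := by ring

section grad
variable {E : Type*} [NormedAddCommGroup E] [InnerProductSpace ℝ E] [CompleteSpace E]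

lemma taylor_bound (f : E → ℝ) (hf : Differentiable ℝ f) (Q : Set E) (hQ : Convex ℝ Q) (L : ℝ)
    (hL0 : 0 ≤ L)
    (hL : ∀ x ∈ Q, ∀ y ∈ Q, ‖gradient f y - gradient f x‖ ≤ L * ‖y - x‖)
    (x y : E) (hx : x ∈ Q) (hy : y ∈ Q) :
    |f y - f x - inner ℝ (gradient f x) (y - x)| ≤ L * ‖y - x‖ ^ 2 := by
  have hseg : segment ℝ x y ⊆ Q := hQ.segment_subset hx hy
  have := (convex_segment x y).norm_image_sub_le_of_norm_hasFDerivWithin_le'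
    (f := f) (𝕜 := ℝ) (f' := fun z => InnerProductSpace.toDual ℝ E (gradient f z))
    (φ := InnerProductSpace.toDual ℝ E (gradient f x)) (C := L * ‖y - x‖)
    (fun z hz => ((hf z).hasGradientAt.hasFDerivAt).hasFDerivWithinAt)
    (fun z hz => by
      rw [← map_sub, LinearIsometryEquiv.norm_map]
      refine (hL x hx z (hseg hz)).trans ?_
      gcongr
      rw [segment_eq_image'] at hz
      obtain ⟨t, ht, rfl⟩ := hz
      rw [add_sub_cancel_left, norm_smul, Real.norm_of_nonneg ht.1]
      exact mul_le_of_le_one_left (norm_nonneg _) ht.2)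
    (left_mem_segment ℝ x y) (right_mem_segment ℝ x y)
  rw [Real.norm_eq_abs] at this
  simp only [InnerProductSpace.toDual_apply_apply] at this
  rw [pow_two, ← mul_assoc]
  exact this

/-- one block of the recursion -/
lemma block_bound (f : E → ℝ) (hf : Differentiable ℝ f) (Q : Set E) (hQ : Convex ℝ Q) (L T : ℝ)
    (hL1 : 1 ≤ L) (hT : T = 1 / (80 * L))
    (hL : ∀ x ∈ Q, ∀ y ∈ Q, ‖gradient f y - gradient f x‖ ≤ L * ‖y - x‖)
    (α γ : ℕ → ℝ) (hαpos : ∀ n, 0 < α n) (hγs : ∀ n, γ (n + 1) = γ n + α n)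
    (θ ξ : ℕ → E) (hθ : ∀ n, θ n ∈ Q)
    (hrec : ∀ n, θ (n + 1) = θ n - α n • (gradient f (θ n) + ξ n))
    (n : ℕ) (ε : ℝ) (hε : 0 ≤ ε)
    (hξ : ∀ k ≥ n, γ k - γ n ≤ 1 → ‖∑ i ∈ Finset.Ico n k, α i • ξ i‖ ≤ ε) :
    (∀ k ≥ n, γ k - γ n ≤ T → ‖θ k - θ n‖ ≤ 2 * (T * ‖gradient f (θ n)‖ + ε)) ∧
    (∀ k ≥ n, γ k - γ n ≤ T → T / 2 ≤ γ k - γ n →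
      f (θ k) ≤ f (θ n) - T / 4 * ‖gradient f (θ n)‖ ^ 2 + (8 / T + 8 * L) * ε ^ 2) := by
  have hT0 : 0 < T := by rw [hT]; positivity
  have hLT : L * T = 1 / 80 := by rw [hT]; field_simp
  have hT1 : T ≤ 1 := by nlinarith
  set G := ‖gradient f (θ n)‖ with hG
  have hG0 : 0 ≤ G := norm_nonneg _
  set B := 2 * (T * G + ε) with hB
  have hB0 : 0 ≤ B := by positivity
  have hmono : StrictMono γ := strictMono_nat_of_lt_succ fun n => by
    rw [hγs]; linarith [hαpos n]
  have hsum : ∀ k ≥ n, ∑ i ∈ Finset.Ico n k, α i = γ k - γ n := by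
    intro k hk
    induction k, hk using Nat.le_induction with
    | base => simp
    | succ k hk ih => rw [Finset.sum_Ico_succ_top hk, ih, hγs]; ring
  have hexp : ∀ k ≥ n, θ k - θ n = -((γ k - γ n) • gradient f (θ n))
      - ∑ i ∈ Finset.Ico n k, α i • (gradient f (θ i) - gradient f (θ n))
      - ∑ i ∈ Finset.Ico n k, α i • ξ i := by
    intro k hk
    induction k, hk using Nat.le_induction with
    | base => simp
    | succ k hk ih =>
      rw [Finset.sum_Ico_succ_top hk, Finset.sum_Ico_succ_top hk, hrec, hγs]
      have : θ k = θ n + (-((γ k - γ n) • gradient f (θ n))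
        - ∑ i ∈ Finset.Ico n k, α i • (gradient f (θ i) - gradient f (θ n))
        - ∑ i ∈ Finset.Ico n k, α i • ξ i) := by rw [← ih]; abel
      have e : θ k - α k • (gradient f (θ k) + ξ k) - θ n
        = (θ k - θ n) - α k • (gradient f (θ k) + ξ k) := by abel
      rw [e, ih]
      module
  have herr : ∀ k ≥ n, (∀ i, n ≤ i → i < k → ‖θ i - θ n‖ ≤ B) → γ k - γ n ≤ T →
      ‖∑ i ∈ Finset.Ico n k, α i • (gradient f (θ i) - gradient f (θ n))‖ ≤ T * (L * B) := by
    intro k hk hi hkT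
    calc _ ≤ ∑ i ∈ Finset.Ico n k, ‖α i • (gradient f (θ i) - gradient f (θ n))‖ :=
          norm_sum_le _ _
      _ ≤ ∑ i ∈ Finset.Ico n k, α i * (L * B) := by
          refine Finset.sum_le_sum fun i hik => ?_
          rw [Finset.mem_Ico] at hik
          rw [norm_smul, Real.norm_of_nonneg (hαpos i).le]
          refine mul_le_mul_of_nonneg_left ?_ (hαpos i).le
          refine (hL _ (hθ n) _ (hθ i)).trans ?_
          have := hi i hik.1 hik.2
          gcongr
      _ = (γ k - γ n) * (L * B) := by rw [← Finset.sum_mul, hsum k hk]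
      _ ≤ _ := by gcongr
  have hdist : ∀ k ≥ n, γ k - γ n ≤ T → ‖θ k - θ n‖ ≤ B := by
    intro k
    induction k using Nat.strong_induction_on with
    | _ k ih =>
      intro hk hkT
      have h1 := herr k hk (fun i hi hik => ih i hik hi (by
        have := hmono hik; linarith)) hkT
      have h2 := hξ k hk (hkT.trans hT1)
      have h0 : 0 ≤ γ k - γ n := sub_nonneg.2 (hmono.monotone hk)
      have h3 : ‖(γ k - γ n) • gradient f (θ n)‖ ≤ T * G := by
        rw [norm_smul, Real.norm_of_nonneg h0]; gcongr
      rw [hexp k hk]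
      have h4 := norm_sub_le (-((γ k - γ n) • gradient f (θ n))
        - ∑ i ∈ Finset.Ico n k, α i • (gradient f (θ i) - gradient f (θ n)))
        (∑ i ∈ Finset.Ico n k, α i • ξ i)
      have h5 := norm_sub_le (-((γ k - γ n) • gradient f (θ n)))
        (∑ i ∈ Finset.Ico n k, α i • (gradient f (θ i) - gradient f (θ n)))
      rw [norm_neg] at h5
      have h6 : T * (L * B) = 1 / 80 * B := by rw [← hLT]; ring
      linarith
  refine ⟨hdist, fun k hk hkT hkT2 => ?_⟩
  have h1 := herr k hk (fun i hi hik => hdist i hi (by have := hmono hik; linarith)) hkT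
  have h2 := hξ k hk (hkT.trans hT1)
  have h3 := (abs_le.1 (taylor_bound f hf Q hQ L (by linarith) hL (θ n) (θ k) (hθ n) (hθ k))).2
  have h4 := hdist k hk hkT
  have h5 : inner ℝ (gradient f (θ n)) (θ k - θ n) ≤
      -(T / 2 * G ^ 2) + G * (T * (L * B)) + G * ε := by
    rw [hexp k hk, inner_sub_right, inner_sub_right, inner_neg_right, inner_smul_right,
      real_inner_self_eq_norm_sq, ← hG]
    have i1 := (abs_le.1 (abs_real_inner_le_norm (gradient f (θ n))
      (∑ i ∈ Finset.Ico n k, α i • (gradient f (θ i) - gradient f (θ n))))).1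
    have i2 := (abs_le.1 (abs_real_inner_le_norm (gradient f (θ n))
      (∑ i ∈ Finset.Ico n k, α i • ξ i))).1
    rw [← hG] at i1 i2
    have j1 := mul_le_mul_of_nonneg_left h1 hG0
    have j2 := mul_le_mul_of_nonneg_left h2 hG0
    have j3 := mul_le_mul_of_nonneg_right hkT2 (sq_nonneg G)
    linarith
  have h6 : L * ‖θ k - θ n‖ ^ 2 ≤ L * B ^ 2 := by gcongr
  have h7 : G * (T * (L * B)) = 1 / 40 * T * G ^ 2 + 1 / 40 * (G * ε) := by
    have : G * (T * (L * B)) = (L * T) * G * B := by ring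
    rw [this, hLT, hB]; ring
  have h8 : L * B ^ 2 ≤ 1 / 10 * T * G ^ 2 + 8 * L * ε ^ 2 := by
    have : 0 ≤ L * (T * G - ε) ^ 2 := by positivity
    have e : L * B ^ 2 + 4 * (L * (T * G - ε) ^ 2) = 8 * ((L * T) * T * G ^ 2) + 8 * L * ε ^ 2 := by
      rw [hB]; ring
    rw [hLT] at e
    linarith
  have h9 : 2 * (G * ε) ≤ T / 8 * G ^ 2 + 8 / T * ε ^ 2 := by
    have : 0 ≤ 1 / (8 * T) * (T * G - 8 * ε) ^ 2 := by positivity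
    have e : 1 / (8 * T) * (T * G - 8 * ε) ^ 2 = T / 8 * G ^ 2 - 2 * (G * ε) + 8 / T * ε ^ 2 := by
      field_simp; ring
    linarith
  have h10 : 0 ≤ G * ε := by positivity
  have h11 : 0 ≤ T * G ^ 2 := by positivity
  linarith

end grad

lemma exists_blocks (α γ : ℕ → ℝ) (hαpos : ∀ n, 0 < α n) (hγs : ∀ n, γ (n + 1) = γ n + α n)
    (hα0 : Tendsto α atTop (nhds 0)) (hαdiv : Tendsto γ atTop atTop) (T : ℝ) (hT : 0 < T)
    (N0 : ℕ) :
    ∃ N : ℕ → ℕ, StrictMono N ∧ N0 ≤ N 0 ∧ (∀ j, γ (N j) + T / 2 ≤ γ (N (j + 1))) ∧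
      (∀ j, γ (N (j + 1)) ≤ γ (N j) + T) := by
  have hmono : StrictMono γ := strictMono_nat_of_lt_succ fun n => by
    rw [hγs]; linarith [hαpos n]
  obtain ⟨N1, hN1⟩ := eventually_atTop.1 (hα0.eventually_le_const (by linarith : 0 < T / 2))
  have step : ∀ n, ∃ k, n < k ∧ (N1 ≤ n → γ n + T / 2 ≤ γ k ∧ γ k ≤ γ n + T) := by
    intro n
    by_cases hn : N1 ≤ n
    · have hex : ∃ k, γ n + T / 2 ≤ γ k := (hαdiv.eventually_ge_atTop _).exists
      classical
      have h1 := Nat.find_spec hex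
      set k := Nat.find hex with hk
      have hnk : n < k := by
        by_contra hcon
        have := hmono.monotone (not_lt.1 hcon)
        linarith
      refine ⟨k, hnk, fun _ => ⟨h1, ?_⟩⟩
      obtain ⟨l, hl⟩ : ∃ l, k = l + 1 := ⟨k - 1, by omega⟩
      have h2 := Nat.find_min hex (m := l) (by omega)
      have h3 := hN1 l (by omega)
      rw [hl, hγs]
      linarith
    · exact ⟨n + 1, by omega, fun h => absurd h hn⟩
  choose nx hnx1 hnx2 using step
  let N : ℕ → ℕ := fun j => Nat.rec (max N0 N1) (fun _ n => nx n) j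
  have hNs : ∀ j, N (j + 1) = nx (N j) := fun j => rfl
  have hsm : StrictMono N := strictMono_nat_of_lt_succ fun j => by rw [hNs]; exact hnx1 _
  have hN1' : ∀ j, N1 ≤ N j := fun j =>
    (le_max_right N0 N1).trans (hsm.monotone (Nat.zero_le j))
  exact ⟨N, hsm, le_max_left _ _, fun j => (hnx2 _ (hN1' j)).1, fun j => (hnx2 _ (hN1' j)).2⟩

lemma find_block (N : ℕ → ℕ) (hN : StrictMono N) (J n : ℕ) (hn : N J ≤ n) :
    ∃ j ≥ J, N j ≤ n ∧ n ≤ N (j + 1) := by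
  induction n, hn using Nat.le_induction with
  | base => exact ⟨J, le_rfl, le_rfl, (hN (Nat.lt_succ_self J)).le⟩
  | succ n hn ih =>
    obtain ⟨j, h1, h2, h3⟩ := ih
    rcases h3.eq_or_lt with h | h
    · have := hN (Nat.lt_succ_self (j + 1))
      exact ⟨j + 1, by omega, by omega, by simp only [Nat.succ_eq_add_one] at this; omega⟩
    · exact ⟨j, h1, by omega, by omega⟩

lemma tele_lim {E : Type*} [NormedAddCommGroup E] [CompleteSpace E] (Θ : ℕ → E) (H : ℕ → ℝ)
    (D : ℝ) (J : ℕ) (h : ∀ j ≥ J, ‖Θ (j + 1) - Θ j‖ ≤ D * (H j - H (j + 1)))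
    (hH : Tendsto H atTop (nhds 0)) :
    ∃ l, Tendsto Θ atTop (nhds l) ∧ ∀ j ≥ J, ‖Θ j - l‖ ≤ D * H j := by
  have key : ∀ j ≥ J, ∀ i ≥ j, ‖Θ i - Θ j‖ ≤ D * (H j - H i) := by
    intro j hj i hi
    induction i, hi using Nat.le_induction with
    | base => simp
    | succ i hi ih =>
      have := h i (hj.trans hi)
      calc ‖Θ (i + 1) - Θ j‖ = ‖(Θ (i + 1) - Θ i) + (Θ i - Θ j)‖ := by congr 1; abel
        _ ≤ _ := norm_add_le _ _
        _ ≤ _ := by linarith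
  have hD : ∀ j ≥ J, Tendsto (fun i => D * (H j - H i)) atTop (nhds (D * H j)) := by
    intro j _
    have := (hH.const_sub (H j)).const_mul D
    simpa using this
  have hnn : ∀ j ≥ J, 0 ≤ D * H j := fun j hj =>
    ge_of_tendsto (hD j hj) (eventually_atTop.2 ⟨j, fun i hi =>
      (norm_nonneg _).trans (key j hj i hi)⟩)
  have hle : ∀ j ≥ J, ∀ i ≥ j, ‖Θ i - Θ j‖ ≤ D * H j := by
    intro j hj i hi
    have h1 := key j hj i hi
    have h2 := hnn i (hj.trans hi)
    nlinarith
  have hc : CauchySeq Θ := by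
    rw [Metric.cauchySeq_iff']
    intro ε hε
    have hz : Tendsto (fun j => D * H j) atTop (nhds 0) := by simpa using hH.const_mul D
    obtain ⟨j, h1, h2⟩ := ((hz.eventually_lt_const hε).and (eventually_ge_atTop J)).exists
    exact ⟨j, fun i hi => by rw [dist_eq_norm]; exact (hle j h2 i hi).trans_lt h1⟩
  obtain ⟨l, hl⟩ := cauchySeq_tendsto_of_complete hc
  refine ⟨l, hl, fun j hj => ?_⟩
  rw [norm_sub_rev]
  exact le_of_tendsto ((hl.sub_const (Θ j)).norm)
    (eventually_atTop.2 ⟨j, fun i hi => hle j hj i hi⟩)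

lemma min_exp (μ r : ℝ) (hμ : μ ∈ Set.Ioc (1 : ℝ) 2) (hr : 1 < r) :
    1 < (if μ < 2 then min r (1 / (2 - μ)) else r) ∧
    (if μ < 2 then min r (1 / (2 - μ)) else r) ≤ r ∧
    (2 - μ) * (if μ < 2 then min r (1 / (2 - μ)) else r) ≤ 1 := by
  obtain ⟨h1, h2⟩ := hμ
  split_ifs with h
  · have h3 : 0 < 2 - μ := by linarith
    refine ⟨lt_min hr ?_, min_le_left _ _, ?_⟩
    · rw [lt_div_iff₀ h3]; linarith
    · calc _ ≤ (2 - μ) * (1 / (2 - μ)) := by gcongr; exact min_le_right _ _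
        _ = 1 := by field_simp
  · have : μ = 2 := le_antisymm h2 (not_lt.1 h)
    subst this
    exact ⟨hr, le_rfl, by norm_num⟩

lemma deterministic {E : Type*} [NormedAddCommGroup E] [InnerProductSpace ℝ E] [CompleteSpace E]
    [ProperSpace E]
    (f : E → ℝ) (hfd : Differentiable ℝ f)
    (hlip : LocallyLipschitz (fun x => gradient f x))
    (α : ℕ → ℝ) (hαpos : ∀ n, 0 < α n)
    (θ ξ : ℕ → E)
    (hrec : ∀ n, θ (n + 1) = θ n - α n • (gradient f (θ n) + ξ n))
    (hα0 : Tendsto α atTop (nhds 0))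
    (γ : ℕ → ℝ) (hγ : ∀ n, γ n = ∑ i ∈ Finset.range n, α i)
    (hαdiv : Tendsto γ atTop atTop)
    (R : ℝ) (hR : ∀ n, ‖θ n‖ ≤ R)
    (r : ℝ) (hr : 1 < r)
    (hnb : ∃ (C : ℝ) (N : ℕ), 0 ≤ C ∧ 1 ≤ N ∧ ∀ n ≥ N, ∀ k ≥ n, γ k - γ n ≤ 1 →
      ‖∑ i ∈ Finset.Ico n k, α i • ξ i‖ ≤ C * γ n ^ (-r))
    (hLoj : ∀ Q : Set E, IsCompact Q → ∀ b ∈ f '' Q,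
      ∃ δ μ M : ℝ, δ ∈ Set.Ioc (0 : ℝ) 1 ∧ μ ∈ Set.Ioc (1 : ℝ) 2 ∧ 1 ≤ M ∧
        ∀ x ∈ Q, |f x - b| ≤ δ → |f x - b| ≤ M * ‖gradient f x‖ ^ μ)
    (δl μl Ml : E → ℝ)
    (hδl : ∀ x, δl x ∈ Set.Ioc (0 : ℝ) 1)
    (hμl : ∀ x, μl x ∈ Set.Ioc (1 : ℝ) 2)
    (hMl : ∀ x, 1 ≤ Ml x)
    (hLocal : ∀ x y, ‖y - x‖ ≤ δl x → |f y - f x| ≤ Ml x * ‖gradient f y‖ ^ μl x)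
    (rmin p q : E → ℝ)
    (hrmin : ∀ x, rmin x = if μl x < 2 then min r (1 / (2 - μl x)) else r)
    (hp : ∀ x, p x = μl x * rmin x)
    (hq : ∀ x, q x = rmin x - 1) :
      ∃ θhat, Tendsto θ atTop (nhds θhat) ∧
          ((fun n => ‖gradient f (θ n)‖ ^ 2) =O[atTop] fun n => γ n ^ (-(p θhat))) ∧
          ((fun n => |f (θ n) - f θhat|) =O[atTop] fun n => γ n ^ (-(p θhat))) ∧
          ((fun n => ‖θ n - θhat‖) =O[atTop] fun n => γ n ^ (-(q θhat))) := by
  have hγs : ∀ n, γ (n + 1) = γ n + α n := fun n => by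
    rw [hγ, hγ, Finset.sum_range_succ]
  have hmono : StrictMono γ := strictMono_nat_of_lt_succ fun n => by
    rw [hγs]; linarith [hαpos n]
  -- the compact set and the Lipschitz constant
  set Q : Set E := Metric.closedBall 0 R with hQ
  have hQc : IsCompact Q := isCompact_closedBall _ _
  have hQconv : Convex ℝ Q := convex_closedBall _ _
  have hθQ : ∀ n, θ n ∈ Q := fun n => by rw [hQ, mem_closedBall_zero_iff]; exact hR n
  obtain ⟨L0, hL0⟩ := LocallyLipschitzOn.exists_lipschitzOnWith_of_compact hQc
    (hlip.locallyLipschitzOn (s := Q))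
  set L : ℝ := max 1 L0 with hLdef
  have hL1 : 1 ≤ L := le_max_left _ _
  have hL : ∀ x ∈ Q, ∀ y ∈ Q, ‖gradient f y - gradient f x‖ ≤ L * ‖y - x‖ := by
    intro x hx y hy
    have := hL0.dist_le_mul y hy x hx
    rw [dist_eq_norm, dist_eq_norm] at this
    exact this.trans (by gcongr; exact le_max_right _ _)
  obtain ⟨T, hTdef⟩ : ∃ T : ℝ, T = 1 / (80 * L) := ⟨_, rfl⟩
  have hT0 : 0 < T := by rw [hTdef]; positivity
  have hT1 : T ≤ 1 := by
    rw [hTdef, div_le_one (by linarith)]; linarith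
  obtain ⟨C, N1, hC, hN1, hnoise⟩ := hnb
  obtain ⟨N2, hN2⟩ := eventually_atTop.1 (hαdiv.eventually_ge_atTop 1)
  obtain ⟨N, hNm, hN0, hNl, hNu⟩ := exists_blocks α γ hαpos hγs hα0 hαdiv T hT0 (max N1 N2)
  have hNge : ∀ j, max N1 N2 ≤ N j := fun j => hN0.trans (hNm.monotone (Nat.zero_le j))
  let s : ℕ → ℝ := fun j => γ (N j)
  let G : ℕ → ℝ := fun j => ‖gradient f (θ (N j))‖
  have hs1 : ∀ j, 1 ≤ s j := fun j => hN2 _ ((le_max_right _ _).trans (hNge j))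
  have sp : ∀ j, 0 < s j := fun j => by linarith [hs1 j]
  have hst : Tendsto s atTop atTop := hαdiv.comp hNm.tendsto_atTop
  have hG0 : ∀ j, 0 ≤ G j := fun j => norm_nonneg _
  have hblk : ∀ j, _ := fun j => block_bound f hfd Q hQconv L T hL1 hTdef hL α γ hαpos hγs θ ξ hθQ
    hrec (N j) (C * s j ^ (-r)) (mul_nonneg hC (Real.rpow_nonneg (sp j).le _))
    (hnoise (N j) ((le_max_left _ _).trans (hNge j)))
  obtain ⟨D0, hD0⟩ : ∃ D0 : ℝ, D0 = 2 + 2 * C := ⟨_, rfl⟩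
  have hD0p : 0 ≤ D0 := by rw [hD0]; positivity
  have hin : ∀ j k, N j ≤ k → k ≤ N (j + 1) → ‖θ k - θ (N j)‖ ≤ D0 * (G j + s j ^ (-r)) := by
    intro j k h1 h2
    have h3 : γ k - γ (N j) ≤ T := by
      have := hmono.monotone h2
      have := hNu j
      linarith
    refine ((hblk j).1 k h1 h3).trans ?_
    have e1 : 0 ≤ s j ^ (-r) := Real.rpow_nonneg (sp j).le _
    have e2 : 0 ≤ C * G j := mul_nonneg hC (hG0 j)
    have e3 : T * G j ≤ 1 * G j := mul_le_mul_of_nonneg_right hT1 (hG0 j)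
    have e4 : T * ‖gradient f (θ (N j))‖ ≤ 1 * G j := e3
    rw [hD0]
    nlinarith
  obtain ⟨C', hC'⟩ : ∃ C' : ℝ, C' = (8 / T + 8 * L) * C ^ 2 := ⟨_, rfl⟩
  have hC'0 : 0 ≤ C' := by rw [hC']; positivity
  have hdesc : ∀ j, f (θ (N (j + 1))) ≤ f (θ (N j)) - T / 4 * G j ^ 2 + C' * s j ^ (-(2 * r)) := by
    intro j
    have h1 := (hblk j).2 (N (j + 1)) (hNm (Nat.lt_succ_self j)).le (by linarith [hNu j])
      (by linarith [hNl j])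
    refine h1.trans (le_of_eq ?_)
    have : s j ^ (-(2 * r)) = (s j ^ (-r)) ^ 2 := by
      rw [← Real.rpow_natCast, ← Real.rpow_mul (sp j).le]; congr 1; push_cast; ring
    rw [this, hC']
    simp only [G]
    ring
  -- convergence of the values
  have hs0 : ∀ e : ℝ, 0 < e → Tendsto (fun j => s j ^ (-e)) atTop (nhds 0) := fun e he =>
    (tendsto_rpow_neg_atTop he).comp hst
  obtain ⟨u, hu⟩ : ∃ u, Tendsto (fun j => f (θ (N j))) atTop (nhds u) := by
    set B := 2 ^ r / ((r - 1) * (T / 2)) with hB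
    let w : ℕ → ℝ := fun j => f (θ (N j)) + C' * B * s j ^ (1 - r)
    have hB0 : 0 ≤ B := by
      have : 0 < (r - 1) * (T / 2) := mul_pos (by linarith) (by linarith)
      positivity
    have hanti : Antitone w := antitone_nat_of_succ_le fun j => by
      have h1 := hdesc j
      have h2 := rpow_tele r T (s j) (s (j + 1)) hr (hs1 j) hT0 (hNl j) (by linarith [hNu j])
      have h3 : s j ^ (-(2 * r)) ≤ s j ^ (-r) :=
        Real.rpow_le_rpow_of_exponent_le (hs1 j) (by linarith)
      have h4 : 0 ≤ T / 4 * G j ^ 2 := by positivity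
      have h5 := mul_le_mul_of_nonneg_left (h3.trans h2) hC'0
      simp only [w]
      rw [← hB] at h5
      linarith
    obtain ⟨b, hb⟩ := (hQc.image hfd.continuous).bddBelow
    have hbdd : BddBelow (Set.range w) := ⟨b, by
      rintro _ ⟨j, rfl⟩
      have h1 := hb ⟨θ (N j), hθQ _, rfl⟩
      have h2 : 0 ≤ C' * B * s j ^ (1 - r) :=
        mul_nonneg (mul_nonneg hC'0 hB0) (Real.rpow_nonneg (sp j).le _)
      simp only [w]; linarith⟩
    have h1 := tendsto_atTop_ciInf hanti hbdd
    have h2 := (hs0 (r - 1) (by linarith)).const_mul (C' * B)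
    have h3 := h1.sub h2
    refine ⟨_, h3.congr fun j => ?_⟩
    simp only [w]
    rw [neg_sub]; ring
  have huQ : u ∈ f '' Q := (hQc.image hfd.continuous).isClosed.mem_of_tendsto hu
    (Eventually.of_forall fun j => ⟨_, hθQ _, rfl⟩)
  let x : ℕ → ℝ := fun j => f (θ (N j)) - u
  have hx0 : Tendsto x atTop (nhds 0) := by
    have := hu.sub_const u
    rwa [sub_self] at this
  have hxdesc : ∀ j, x (j + 1) ≤ x j - T / 4 * G j ^ 2 + C' * s j ^ (-(2 * r)) := fun j => by
    have := hdesc j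
    simp only [x]; linarith
  have hrates : ∀ μ M : ℝ, μ ∈ Set.Ioc (1 : ℝ) 2 → 1 ≤ M →
      (∀ᶠ j in atTop, |x j| ≤ M * G j ^ μ) → _ := fun μ M hμ hM hl =>
    seq_rates μ (if μ < 2 then min r (1 / (2 - μ)) else r) r T (T / 4) C' M x G s hμ.1 hμ.2
      (min_exp μ r hμ hr).1 (min_exp μ r hμ hr).2.1 (min_exp μ r hμ hr).2.2 hT0 hT1
      (by linarith) hC'0 hM hG0 hs1 hNl hNu hst hx0 hxdesc hl
  have hHlim : ∀ (m K : ℝ) (J : ℕ) (H : ℕ → ℝ), 1 < m →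
      (∀ j ≥ J, |H j| ≤ K * s j ^ (-(m - 1))) → Tendsto H atTop (nhds 0) := by
    intro m K J H hm h
    have h2 := (hs0 (m - 1) (by linarith)).const_mul K
    rw [mul_zero] at h2
    exact squeeze_zero_norm' (eventually_atTop.2 ⟨J, fun j hj => h j hj⟩) h2
  have hstep : ∀ (J : ℕ) (H : ℕ → ℝ), (∀ j ≥ J, G j + s j ^ (-r) ≤ H j - H (j + 1)) →
      ∀ j ≥ J, ‖θ (N (j + 1)) - θ (N j)‖ ≤ D0 * (H j - H (j + 1)) := fun J H h j hj =>
    (hin j _ (hNm (Nat.lt_succ_self j)).le le_rfl).trans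
      (mul_le_mul_of_nonneg_left (h j hj) hD0p)
  -- convergence
  obtain ⟨θhat, hθhat⟩ : ∃ l, Tendsto θ atTop (nhds l) := by
    obtain ⟨δ, μ, M, hδ, hμ, hM, hloj⟩ := hLoj Q hQc u huQ
    have hl : ∀ᶠ j in atTop, |x j| ≤ M * G j ^ μ := by
      have h1 : Tendsto (fun j => |x j|) atTop (nhds 0) := by simpa using hx0.abs
      filter_upwards [h1.eventually_le_const hδ.1] with j hj
      exact hloj _ (hθQ _) hj
    obtain ⟨K, J, H, hK, hall⟩ := hrates μ M hμ hM hl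
    have hH := hHlim _ K J H (min_exp μ r hμ hr).1 (fun j hj => (hall j hj).2.2.1)
    obtain ⟨l, hl1, hl2⟩ := tele_lim (fun j => θ (N j)) H D0 J
      (hstep J H fun j hj => (hall j hj).2.2.2) hH
    refine ⟨l, ?_⟩
    rw [Metric.tendsto_atTop]
    intro ε hε
    have h1 : Tendsto (fun j => D0 * (H j - H (j + 1)) + D0 * H j) atTop (nhds 0) := by
      have := ((hH.sub ((tendsto_add_atTop_iff_nat 1).2 hH)).const_mul D0).add (hH.const_mul D0)
      simpa using this
    obtain ⟨J1, hJ1⟩ := eventually_atTop.1 (h1.eventually_lt_const hε)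
    refine ⟨N (max J J1), fun n hn => ?_⟩
    obtain ⟨j, hj, hj1, hj2⟩ := find_block N hNm _ n hn
    have hjJ := (le_max_left _ _).trans hj
    have e1 := (hin j n hj1 hj2).trans
      (mul_le_mul_of_nonneg_left (hall j hjJ).2.2.2 hD0p)
    have e2 := hl2 j hjJ
    have e3 := hJ1 j ((le_max_right _ _).trans hj)
    rw [dist_eq_norm]
    calc ‖θ n - l‖ = ‖(θ n - θ (N j)) + (θ (N j) - l)‖ := by congr 1; abel
      _ ≤ _ := norm_add_le _ _
      _ < ε := by linarith
  have huhat : u = f θhat :=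
    tendsto_nhds_unique hu
      ((hfd.continuous.tendsto θhat).comp (hθhat.comp hNm.tendsto_atTop))
  refine ⟨θhat, hθhat, ?_⟩
  have hl : ∀ᶠ j in atTop, |x j| ≤ Ml θhat * G j ^ μl θhat := by
    have h1 : Tendsto (fun j => ‖θ (N j) - θhat‖) atTop (nhds 0) :=
      tendsto_iff_norm_sub_tendsto_zero.1 (hθhat.comp hNm.tendsto_atTop)
    filter_upwards [h1.eventually_le_const (hδl θhat).1] with j hj
    simp only [x]
    rw [huhat]
    exact hLocal _ _ hj
  obtain ⟨K, J, H, hK, hall⟩ := hrates _ _ (hμl θhat) (hMl θhat) hl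
  obtain ⟨hm1, hmr, hmμ⟩ := min_exp _ r (hμl θhat) hr
  rw [← hrmin θhat] at hall hm1 hmr hmμ
  rw [hp θhat, hq θhat]
  have hμ1 := (hμl θhat).1
  have hμ2 := (hμl θhat).2
  generalize rmin θhat = m at *
  generalize μl θhat = μ at *
  have hH := hHlim _ K J H hm1 (fun j hj => (hall j hj).2.2.1)
  obtain ⟨l, hl1, hl2⟩ := tele_lim (fun j => θ (N j)) H D0 J
      (hstep J H fun j hj => (hall j hj).2.2.2) hH
  have hll : l = θhat := tendsto_nhds_unique hl1 (hθhat.comp hNm.tendsto_atTop)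
  subst hll
  have hμm : 0 ≤ μ * m := by positivity
  -- the per-block estimates
  have hfin : ∀ n ≥ N J, ∃ j ≥ J, N j ≤ n ∧ n ≤ N (j + 1) ∧ s j ≤ γ n ∧ γ n ≤ s j + 1 := by
    intro n hn
    obtain ⟨j, hj, hj1, hj2⟩ := find_block N hNm _ n hn
    have h1 := hmono.monotone hj1
    have h2 := hmono.monotone hj2
    have h3 := hNu j
    exact ⟨j, hj, hj1, hj2, h1, by simp only [s]; linarith⟩
  have hW : ∀ j ≥ J, (G j + s j ^ (-r)) ^ 2 ≤ (2 * K + 2) * s j ^ (-(μ * m)) := by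
    intro j hj
    have h1 := (hall j hj).2.1
    have h2 : (s j ^ (-r)) ^ 2 = s j ^ (-(2 * r)) := by
      rw [← Real.rpow_natCast, ← Real.rpow_mul (sp j).le]; congr 1; push_cast; ring
    have h3 : s j ^ (-(2 * r)) ≤ s j ^ (-(μ * m)) :=
      Real.rpow_le_rpow_of_exponent_le (hs1 j) (by nlinarith)
    nlinarith [sq_nonneg (G j - s j ^ (-r))]
  have hrn : ∀ j, 0 ≤ s j ^ (-r) := fun j => Real.rpow_nonneg (sp j).le _
  have hbigO : ∀ (g : ℕ → ℝ) (A e : ℝ), 0 ≤ e → 0 ≤ A →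
      (∀ n j, J ≤ j → N j ≤ n → n ≤ N (j + 1) → |g n| ≤ A * s j ^ (-e)) →
      g =O[atTop] fun n => γ n ^ (-e) := by
    intro g A e he hA h
    refine IsBigO.of_bound (A * 2 ^ e) (eventually_atTop.2 ⟨N J, fun n hn => ?_⟩)
    obtain ⟨j, hj, hj1, hj2, h1, h2⟩ := hfin n hn
    have h3 := rpow_half e (s j) (γ n) he (hs1 j) h1 h2
    rw [Real.norm_eq_abs, Real.norm_of_nonneg (Real.rpow_nonneg (by linarith [sp j]) _)]
    calc _ ≤ A * s j ^ (-e) := h n j hj hj1 hj2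
      _ ≤ A * (2 ^ e * γ n ^ (-e)) := by gcongr
      _ = _ := by ring
  refine ⟨?_, ?_, ?_⟩
  · refine hbigO _ ((1 + L * D0) ^ 2 * (2 * K + 2)) _ hμm (by positivity) fun n j hj h1 h2 => ?_
    have e1 := hL _ (hθQ (N j)) _ (hθQ n)
    have e2 := hin j n h1 h2
    have e3 : ‖gradient f (θ n)‖ ≤ (1 + L * D0) * (G j + s j ^ (-r)) := by
      have a1 := norm_sub_norm_le (gradient f (θ n)) (gradient f (θ (N j)))
      have a2 := mul_le_mul_of_nonneg_left e2 (by linarith : 0 ≤ L)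
      have a3 : ‖gradient f (θ (N j))‖ = G j := rfl
      have a4 := hrn j
      nlinarith
    rw [abs_of_nonneg (by positivity)]
    calc _ ≤ ((1 + L * D0) * (G j + s j ^ (-r))) ^ 2 := by gcongr
      _ = (1 + L * D0) ^ 2 * (G j + s j ^ (-r)) ^ 2 := by ring
      _ ≤ (1 + L * D0) ^ 2 * ((2 * K + 2) * s j ^ (-(μ * m))) := by
          gcongr; exact hW j hj
      _ = _ := by ring
  · refine hbigO _ ((D0 + L * D0 ^ 2) * (2 * K + 2) + K) _ hμm (by positivity)
      fun n j hj h1 h2 => ?_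
    have e1 := taylor_bound f hfd Q hQconv L (by linarith) hL (θ (N j)) (θ n) (hθQ _) (hθQ _)
    have e2 := hin j n h1 h2
    have e3 := abs_real_inner_le_norm (gradient f (θ (N j))) (θ n - θ (N j))
    have e4 := (hall j hj).1
    have e5 : |f (θ (N j)) - f l| = |x j| := by simp only [x]; rw [huhat]
    have e6 : L * ‖θ n - θ (N j)‖ ^ 2 ≤ L * (D0 * (G j + s j ^ (-r))) ^ 2 := by gcongr
    have e7 : ‖gradient f (θ (N j))‖ * ‖θ n - θ (N j)‖ ≤
        (G j + s j ^ (-r)) * (D0 * (G j + s j ^ (-r))) := by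
      refine mul_le_mul ?_ e2 (norm_nonneg _) (add_nonneg (hG0 j) (hrn j))
      exact le_add_of_nonneg_right (hrn j)
    have e8 := mul_le_mul_of_nonneg_left (hW j hj)
      (by positivity : 0 ≤ D0 + L * D0 ^ 2)
    rw [abs_abs]
    have e9 : f (θ n) - f l = (f (θ n) - f (θ (N j)) -
      inner ℝ (gradient f (θ (N j))) (θ n - θ (N j)))
      + inner ℝ (gradient f (θ (N j))) (θ n - θ (N j)) + (f (θ (N j)) - f l) := by ring
    rw [e9]
    refine (abs_add_three _ _ _).trans ?_
    rw [e5]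
    calc _ ≤ L * (D0 * (G j + s j ^ (-r))) ^ 2 + (G j + s j ^ (-r)) * (D0 * (G j + s j ^ (-r)))
          + K * s j ^ (-(μ * m)) := by
            linarith
      _ = (D0 + L * D0 ^ 2) * (G j + s j ^ (-r)) ^ 2 + K * s j ^ (-(μ * m)) := by ring
      _ ≤ _ := by linarith
  · refine hbigO _ (3 * D0 * K) _ (by linarith) (by positivity) fun n j hj h1 h2 => ?_
    have e1 := (hin j n h1 h2).trans
      (mul_le_mul_of_nonneg_left (hall j hj).2.2.2 hD0p)
    have e2 := hl2 j hj
    have e3 := (abs_le.1 (hall j hj).2.2.1).2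
    have e4 := (abs_le.1 (hall (j + 1) (by omega)).2.2.1).1
    have e5 : s (j + 1) ^ (-(m - 1)) ≤ s j ^ (-(m - 1)) :=
      Real.rpow_le_rpow_of_nonpos (sp j) (by have := hNl j; simp only [s]; linarith) (by linarith)
    have e6 := mul_le_mul_of_nonneg_left e5 hK
    rw [abs_of_nonneg (norm_nonneg _)]
    have e7 : H j - H (j + 1) + H j ≤ 3 * (K * s j ^ (-(m - 1))) := by linarith
    have e8 := mul_le_mul_of_nonneg_left e7 hD0p
    calc ‖θ n - l‖ = ‖(θ n - θ (N j)) + (θ (N j) - l)‖ := by congr 1; abel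
      _ ≤ _ := norm_add_le _ _
      _ ≤ D0 * (H j - H (j + 1) + H j) := by linarith
      _ ≤ _ := by linarith

/-- Corollary 1.1 (ii) of the paper: under Assumptions 1.1,
1.2, 1.3, almost surely on `Λ` minus `{ξ = 0, r̂ > r}` (with `θ̂ = lim θ_n`):
`‖∇f(θ_n)‖² = O(γ_n^{−p̂})`, `|f(θ_n) − f(θ̂)| = O(γ_n^{−p̂})` and
`‖θ_n − θ̂‖ = O(γ_n^{−q̂})`.  (`r̂ > r` is the condition
`μ̂ = 2 ∨ r < 1/(2 − μ̂)`.) -/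
theorem stochastic_gradient_big_O_rates
    {d : ℕ} (hd : 1 ≤ d)
    {Ω : Type} [MeasurableSpace Ω] (P : Measure Ω) [IsProbabilityMeasure P]
    (f : EuclideanSpace ℝ (Fin d) → ℝ)
    (hfd : Differentiable ℝ f)
    (hlip : LocallyLipschitz (fun x => gradient f x))
    (α : ℕ → ℝ) (hαpos : ∀ n, 0 < α n)
    (θ ξ : ℕ → Ω → EuclideanSpace ℝ (Fin d))
    (hrec : ∀ n ω, θ (n + 1) ω = θ n ω - α n • (gradient f (θ n ω) + ξ n ω))
    -- Assumption 1.1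
    (hα0 : Tendsto α atTop (nhds 0))
    (γ : ℕ → ℝ) (hγ : ∀ n, γ n = ∑ i ∈ Finset.range n, α i)
    (hαdiv : Tendsto γ atTop atTop)
    -- the interpolation index `a(n,t)`
    (a : ℕ → ℝ → ℕ)
    (ha : ∀ n t, 0 < t → a n t = sSup {k | n ≤ k ∧ γ k - γ n ≤ t})
    -- the event Λ
    (Λ : Set Ω) (hΛ : Λ = {ω | ∃ C, ∀ n, ‖θ n ω‖ ≤ C})
    -- Assumption 1.2
    (r : ℝ) (hr : 1 < r)
    (noise : ℕ → Ω → ℝ)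
    (hnoise : ∀ n ω, noise n ω =
      ⨆ k ∈ Set.Ico n (a n 1), ‖∑ i ∈ Finset.Icc n k, (α i * γ i ^ r) • ξ i ω‖)
    (hA12 : ∀ᵐ ω ∂P, ω ∈ Λ → IsBoundedUnder (· ≤ ·) atTop (fun n => noise n ω))
    (Xi : Ω → ℝ) (hXi : ∀ ω, Xi ω = Filter.limsup (fun n => noise n ω) atTop)
    -- Assumption 1.3 (Łojasiewicz-type gradient inequality)
    (hLoj : ∀ Q : Set (EuclideanSpace ℝ (Fin d)), IsCompact Q → ∀ b ∈ f '' Q,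
      ∃ δ μ M : ℝ, δ ∈ Set.Ioc (0 : ℝ) 1 ∧ μ ∈ Set.Ioc (1 : ℝ) 2 ∧ 1 ≤ M ∧
        ∀ x ∈ Q, |f x - b| ≤ δ → |f x - b| ≤ M * ‖gradient f x‖ ^ μ)
    -- the local Łojasiewicz data `δ_θ, μ_θ, M_θ` provided by Assumption 1.3
    (δl μl Ml : EuclideanSpace ℝ (Fin d) → ℝ)
    (hδl : ∀ x, δl x ∈ Set.Ioc (0 : ℝ) 1)
    (hμl : ∀ x, μl x ∈ Set.Ioc (1 : ℝ) 2)
    (hMl : ∀ x, 1 ≤ Ml x)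
    (hLocal : ∀ x y, ‖y - x‖ ≤ δl x → |f y - f x| ≤ Ml x * ‖gradient f y‖ ^ μl x)
    -- `min{r, r_θ}`, `p_θ = μ_θ min{r, r_θ}` and `q_θ = min{r, r_θ} − 1`
    (rmin p q : EuclideanSpace ℝ (Fin d) → ℝ)
    (hrmin : ∀ x, rmin x = if μl x < 2 then min r (1 / (2 - μl x)) else r)
    (hp : ∀ x, p x = μl x * rmin x)
    (hq : ∀ x, q x = rmin x - 1) :
    ∀ᵐ ω ∂P, ω ∈ Λ →
      ∃ θhat, Tendsto (fun n => θ n ω) atTop (nhds θhat) ∧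
        (¬ (Xi ω = 0 ∧ (μl θhat = 2 ∨ r < 1 / (2 - μl θhat))) →
          ((fun n => ‖gradient f (θ n ω)‖ ^ 2) =O[atTop] fun n => γ n ^ (-(p θhat))) ∧
          ((fun n => |f (θ n ω) - f θhat|) =O[atTop] fun n => γ n ^ (-(p θhat))) ∧
          ((fun n => ‖θ n ω - θhat‖) =O[atTop] fun n => γ n ^ (-(q θhat)))) := by
  filter_upwards [hA12] with ω hω hmem
  have hb := hω hmem
  rw [hΛ] at hmem
  obtain ⟨R, hR⟩ := hmem
  have hnb := noise_bound α γ hαpos hγ hαdiv a ha r hr (fun n => ξ n ω) (fun n => noise n ω)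
    (fun n => hnoise n ω) hb
  obtain ⟨l, h1, h2⟩ := deterministic f hfd hlip α hαpos (fun n => θ n ω) (fun n => ξ n ω)
    (fun n => hrec n ω) hα0 γ hγ hαdiv R hR r hr hnb hLoj δl μl Ml hδl hμl hMl hLocal rmin p q
    hrmin hp hq
  exact ⟨l, h1, fun _ => h2⟩
end
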